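/- arXiv:2304.14527 — 6 statements merged into one kernel-verified Lean document; each statement's English description precedes it below -/
import Mathlib

section
/- Let K ≥ 2 be an even integer, let G be a finite simple bipartite graph in which every vertex has degree exactly 2, and let M be a matching in G having no augmenting paths of length ≤ 2K+1. Define Y_0 to be the set of vertices of G not covered by M, and recursively Y_{2k+1} = N_G(Y_{2k}) and Y_{2k+2} = N_M(Y_{2k+1}) for k = 0, 1, …, (K−2)/2. Then |Y_K| = K · |Y_0|. -/
/-- A vertex `v` is covered by a set `M` of edges if it lies on some edge of `M`. -/
def coveredBy {V : Type*} (M : Set (Sym2 V)) (v : V) : Prop := ∃ e ∈ M, v ∈ e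

/-- `M` is a matching in `G`: a set of edges of `G`, no two of which share a vertex. -/
def isMatching {V : Type*} (G : SimpleGraph V) (M : Set (Sym2 V)) : Prop :=
  M ⊆ G.edgeSet ∧ ∀ e ∈ M, ∀ f ∈ M, e ≠ f → ∀ v : V, ¬(v ∈ e ∧ v ∈ f)

/-- `p 0, p 1, …, p l` is an `M`-augmenting path of length `l` in `G`:
a path whose endpoints are not covered by `M`, whose edges alternate outside/inside `M`,
beginning and ending with edges outside `M` (so `l` is odd). -/
def isAugPath {V : Type*} (G : SimpleGraph V) (M : Set (Sym2 V)) (p : ℕ → V) (l : ℕ) : Prop :=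
  Odd l ∧ (∀ i < l, G.Adj (p i) (p (i+1))) ∧
  (∀ i ≤ l, ∀ j ≤ l, p i = p j → i = j) ∧
  ¬ coveredBy M (p 0) ∧ ¬ coveredBy M (p l) ∧
  ∀ i < l, (s(p i, p (i+1)) ∈ M ↔ Odd i)

/-- `G` is bipartite: the vertices can be split into a set `A` and its complement so that
every edge has one endpoint in `A` and the other outside `A`. -/
def isBipartite {V : Type*} (G : SimpleGraph V) : Prop :=
  ∃ A : Set V, ∀ v w : V, G.Adj v w → (v ∈ A ↔ w ∉ A)

/-- `N_G(S)`: vertices adjacent in `G` to some vertex of `S`. -/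
def NG {V : Type*} (G : SimpleGraph V) (S : Set V) : Set V := {w | ∃ v ∈ S, G.Adj v w}

/-- `N_M(S)`: vertices joined by an edge of `M` to some vertex of `S`. -/
def NM {V : Type*} (M : Set (Sym2 V)) (S : Set V) : Set V := {w | ∃ v ∈ S, s(v, w) ∈ M}

/-- `Yseq G M S` : `Y_0 = S`, `Y_{2k+1} = N_G(Y_{2k})`, `Y_{2k+2} = N_M(Y_{2k+1})`. -/
def Yseq {V : Type*} (G : SimpleGraph V) (M : Set (Sym2 V)) (S : Set V) : ℕ → Set V
  | 0 => S
  | (l+1) => if Even l then NG G (Yseq G M S l) else NM M (Yseq G M S l)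

/-- `Wseq G M x` : `W_0 = {x}`, `W_{2k+1} = N_M(W_{2k})`, `W_{2k+2} = N_G(W_{2k+1})`. -/
def Wseq {V : Type*} (G : SimpleGraph V) (M : Set (Sym2 V)) (x : V) : ℕ → Set V
  | 0 => {x}
  | (l+1) => if Even l then NM M (Wseq G M x l) else NG G (Wseq G M x l)

/-- The set of edges of the path `p 0, …, p l`. -/
def pathEdges {V : Type*} (p : ℕ → V) (l : ℕ) : Set (Sym2 V) :=
  {e | ∃ i < l, e = s(p i, p (i+1))}

/-!
Since every vertex has degree 2, walks without backtracking are deterministic: a dart `(u, v)` has a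
unique successor `(v, w)` with `w ≠ u`, and the successor map is injective. If `u` is uncovered, the
edges along the ray started by `(u, v)` alternate between outside and inside `M` as long as the ray
meets no uncovered vertex again, and meeting one within fewer than `K` steps would produce a short
augmenting path (bipartiteness keeps the ray from meeting itself at positions of different parity).
So `Y_K` consists of the vertices at the positions `2, 4, …, K` of the rays that start at uncovered
vertices. Such a vertex determines the `M`-dart by which its ray arrives there; injectivity of the
successor map then lets us walk back to the start of the ray, which is recognised as the first
uncovered vertex met. The `K / 2` positions on each of the `2 |Y_0|` rays are therefore distinct
vertices.
-/

open Set

/-- 2-regularity: every vertex has exactly two neighbours. Since `ncard` is `0` on infinite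
sets, this includes that neighbourhoods are finite. -/
def IsTwoRegular {V : Type*} (G : SimpleGraph V) : Prop :=
  ∀ v : V, (G.neighborSet v).ncard = 2

/-- The edges `s(p i, p (i + 1))` with `i < n` lie alternately outside and inside `M`, beginning
outside; `n` counts edges, and `p` is not required to be injective. -/
def IsAlternating {V : Type*} (M : Set (Sym2 V)) (p : ℕ → V) (n : ℕ) : Prop :=
  ∀ i < n, s(p i, p (i + 1)) ∈ M ↔ Odd i

section Sequences

variable {V : Type*} {G : SimpleGraph V} {M : Set (Sym2 V)} {p : ℕ → V} {n i j : ℕ} {v x y : V}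

lemma Yseq_two_mul_add_two (S : Set V) (k : ℕ) :
    Yseq G M S (2 * k + 2) = NM M (NG G (Yseq G M S (2 * k))) := by
  rw [Yseq, if_neg (by grind), Yseq, if_pos (by grind)]

lemma isMatching.eq_of_mem_of_mem (hM : isMatching G M) (hx : s(v, x) ∈ M) (hy : s(v, y) ∈ M) :
    x = y := by
  by_contra hne
  exact hM.2 _ hx _ hy (fun h => hne (Sym2.congr_right.1 h)) v
    ⟨Sym2.mem_mk_left v x, Sym2.mem_mk_left v y⟩

lemma isBipartite.even_iff_even_of_apply_eq (hbip : isBipartite G)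
    (hp : ∀ i, G.Adj (p i) (p (i + 1))) (h : p i = p j) : Even i ↔ Even j := by
  obtain ⟨A, hA⟩ := hbip
  have side (i : ℕ) : (p i ∈ A ↔ p 0 ∈ A) ↔ Even i := by
    induction i with
    | zero => simp
    | succ i ih =>
      rw [Nat.even_add_one, ← ih, hA _ _ (hp i)]
      tauto
  rw [← side i, ← side j, h]

lemma IsAlternating.coveredBy (halt : IsAlternating M p n) (hi : 0 < i) (hin : i < n) :
    coveredBy M (p i) := by
  obtain ⟨i, rfl⟩ := Nat.exists_eq_add_one.2 hi
  rcases Nat.even_or_odd i with heven | hodd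
  · exact ⟨_, (halt (i + 1) hin).2 heven.add_one, Sym2.mem_mk_left _ _⟩
  · exact ⟨_, (halt i (by omega)).2 hodd, Sym2.mem_mk_right _ _⟩

end Sequences

lemma encard_setOf_dart_fst_mem {V : Type*} {G : SimpleGraph V} {n : ℕ}
    (hdeg : ∀ v, (G.neighborSet v).encard = n) (S : Set V) :
    {d : G.Dart | d.fst ∈ S}.encard = S.encard * n := by
  have e (v : V) : G.neighborSet v ≃ Fin n := by
    have : Finite (G.neighborSet v) := finite_of_encard_eq_coe (hdeg v)
    exact Finite.equivFinOfCardEq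
      (by rw [Nat.card_coe_set_eq, ncard, hdeg v, ENat.toNat_natCast])
  let label (d : G.Dart) : V × Fin n := (d.fst, e d.fst ⟨d.snd, d.adj⟩)
  have hlabel : Function.Bijective label := by
    refine ⟨?_, fun ⟨v, k⟩ => ?_⟩
    · rintro ⟨⟨v, x⟩, hx⟩ ⟨⟨w, y⟩, hy⟩ h
      obtain ⟨rfl, hxy⟩ := Prod.mk.inj h
      obtain rfl : x = y := congrArg Subtype.val ((e v).injective hxy)
      rfl
    · exact ⟨⟨(v, (e v).symm k), ((e v).symm k).2⟩, Prod.ext rfl ((e v).apply_symm_apply k)⟩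
  calc {d : G.Dart | d.fst ∈ S}.encard
      = (label ⁻¹' (S ×ˢ univ)).encard := by congr 1; ext d; simp [label]
    _ = (S ×ˢ (univ : Set (Fin n))).encard := encard_preimage_of_bijective hlabel _
    _ = S.encard * n := by rw [encard_prod, encard_univ, ENat.card_eq_coe_natCard, Nat.card_fin]

namespace IsTwoRegular

variable {V : Type*} {G : SimpleGraph V} {u v x : V}

lemma encard_neighborSet (hreg : IsTwoRegular G) (v : V) : (G.neighborSet v).encard = 2 := by
  have hfin : (G.neighborSet v).Finite := finite_of_ncard_ne_zero (by rw [hreg v]; decide)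
  rw [← hfin.cast_ncard_eq, hreg v, Nat.cast_ofNat]

lemma existsUnique_adj_ne (hreg : IsTwoRegular G) (h : G.Adj u v) :
    ∃! w, G.Adj v w ∧ w ≠ u := by
  have hcard : (G.neighborSet v \ {u}).ncard = 1 := by
    rw [ncard_sdiff_singleton_of_mem (show u ∈ G.neighborSet v from h.symm), hreg v]
  obtain ⟨w, hw⟩ := ncard_eq_one.1 hcard
  have hiff (x : V) : G.Adj v x ∧ x ≠ u ↔ x = w := Set.ext_iff.1 hw x
  exact ⟨w, (hiff w).2 rfl, fun x hx => (hiff x).1 hx⟩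

/-- The successor of a dart `(u, v)`: the dart `(v, w)` with `w ≠ u`, by which a walk that has just
run through `(u, v)` continues without turning back. -/
noncomputable def next (hreg : IsTwoRegular G) (d : G.Dart) : G.Dart :=
  ⟨(d.snd, (hreg.existsUnique_adj_ne d.adj).choose),
    (hreg.existsUnique_adj_ne d.adj).choose_spec.1.1⟩

lemma next_snd_ne_fst (hreg : IsTwoRegular G) (d : G.Dart) : (hreg.next d).snd ≠ d.fst :=
  (hreg.existsUnique_adj_ne d.adj).choose_spec.1.2

lemma eq_fst_or_eq_next_snd (hreg : IsTwoRegular G) {d : G.Dart} (h : G.Adj d.snd x) :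
    x = d.fst ∨ x = (hreg.next d).snd :=
  or_iff_not_imp_left.2 fun hne =>
    (hreg.existsUnique_adj_ne d.adj).unique ⟨h, hne⟩ ⟨(hreg.next d).adj, hreg.next_snd_ne_fst d⟩

lemma next_injective (hreg : IsTwoRegular G) : Function.Injective hreg.next := by
  intro d e h
  have hsnd : d.snd = e.snd := congrArg (fun c => c.fst) h
  have hadj : G.Adj d.snd e.fst := by rw [hsnd]; exact e.adj.symm
  have hne : e.fst ≠ (hreg.next d).snd := by rw [h]; exact (hreg.next_snd_ne_fst e).symm
  have hfst : d.fst = e.fst :=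
    (hreg.existsUnique_adj_ne (hreg.next d).adj.symm).unique
      ⟨d.adj.symm, (hreg.next_snd_ne_fst d).symm⟩ ⟨hadj, hne⟩
  exact SimpleGraph.Dart.ext _ _ (Prod.ext hfst hsnd)

/-- The vertices of the infinite walk without backtracking whose first step is the dart `d`. -/
noncomputable def ray (hreg : IsTwoRegular G) (d : G.Dart) (i : ℕ) : V :=
  (hreg.next^[i] d).fst

lemma next_iterate_snd (hreg : IsTwoRegular G) (d : G.Dart) (i : ℕ) :
    (hreg.next^[i] d).snd = hreg.ray d (i + 1) := by
  rw [ray, Function.iterate_succ_apply']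
  rfl

lemma ray_adj (hreg : IsTwoRegular G) (d : G.Dart) (i : ℕ) :
    G.Adj (hreg.ray d i) (hreg.ray d (i + 1)) :=
  hreg.next_iterate_snd d i ▸ (hreg.next^[i] d).adj

lemma ray_add_two_ne (hreg : IsTwoRegular G) (d : G.Dart) (i : ℕ) :
    hreg.ray d (i + 2) ≠ hreg.ray d i := by
  rw [← next_iterate_snd, Function.iterate_succ_apply']
  exact hreg.next_snd_ne_fst _

lemma eq_ray_or_eq_ray_add_two (hreg : IsTwoRegular G) {d : G.Dart} {i : ℕ}
    (h : G.Adj (hreg.ray d (i + 1)) x) : x = hreg.ray d i ∨ x = hreg.ray d (i + 2) := by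
  rw [← next_iterate_snd] at h
  rw [← next_iterate_snd, Function.iterate_succ_apply']
  exact hreg.eq_fst_or_eq_next_snd h

section Alternation

variable {M : Set (Sym2 V)} {d e : G.Dart} {i j n : ℕ}

lemma next_iterate_eq_of_ray_succ_eq (hreg : IsTwoRegular G) (hM : isMatching G M)
    (hd : s(hreg.ray d i, hreg.ray d (i + 1)) ∈ M) (he : s(hreg.ray e j, hreg.ray e (j + 1)) ∈ M)
    (h : hreg.ray d (i + 1) = hreg.ray e (j + 1)) : hreg.next^[i] d = hreg.next^[j] e := by
  have hfst : hreg.ray d i = hreg.ray e j := by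
    rw [Sym2.eq_swap] at hd he
    exact hM.eq_of_mem_of_mem hd (h ▸ he)
  refine SimpleGraph.Dart.ext _ _ (Prod.ext hfst ?_)
  rw [hreg.next_iterate_snd, hreg.next_iterate_snd, h]

lemma eq_and_eq_of_ray_succ_eq_of_odd (hreg : IsTwoRegular G) (hM : isMatching G M)
    (hd : ¬ coveredBy M d.fst) (he : ¬ coveredBy M e.fst)
    (hdalt : IsAlternating M (hreg.ray d) n) (healt : IsAlternating M (hreg.ray e) n)
    (hi : Odd i) (hj : Odd j) (hin : i < n) (hjn : j < n)
    (h : hreg.ray d (i + 1) = hreg.ray e (j + 1)) : d = e ∧ i = j := by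
  wlog hij : i ≤ j generalizing d e i j
  · exact (this he hd healt hdalt hj hi hjn hin h.symm (by omega)).imp Eq.symm Eq.symm
  obtain ⟨k, rfl⟩ := Nat.exists_eq_add_of_le hij
  have hdart : d = hreg.next^[k] e := by
    apply hreg.next_injective.iterate i
    rw [← Function.iterate_add_apply]
    exact hreg.next_iterate_eq_of_ray_succ_eq hM ((hdalt i hin).2 hi) ((healt _ hjn).2 hj) h
  obtain rfl | hk := Nat.eq_zero_or_pos k
  · exact ⟨hdart, rfl⟩
  · have hcov : coveredBy M (hreg.next^[k] e).fst := healt.coveredBy hk (by omega)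
    exact absurd (hdart ▸ hcov) hd

lemma injOn_ray_Iic (hreg : IsTwoRegular G) (hbip : isBipartite G)
    (hM : isMatching G M) (hn : Odd n) (hstart : ¬ coveredBy M d.fst)
    (hend : ¬ coveredBy M (hreg.ray d n)) (halt : IsAlternating M (hreg.ray d) n) :
    InjOn (hreg.ray d) (Iic n) := by
  intro a ha b hb h
  wlog hab : a ≤ b generalizing a b
  · exact (this hb ha h.symm (by omega)).symm
  simp only [mem_Iic] at ha hb
  by_contra hne
  have hparity : Even a ↔ Even b := hbip.even_iff_even_of_apply_eq (hreg.ray_adj d) h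
  have hapos : 0 < a := by
    refine Nat.pos_of_ne_zero ?_
    rintro rfl
    have hbn : b ≠ n := by rintro rfl; exact Nat.not_even_iff_odd.2 hn (hparity.1 Even.zero)
    exact hstart
      (show coveredBy M (hreg.ray d 0) from h ▸ halt.coveredBy (by omega) (by omega))
  have hbn : b < n := by
    refine lt_of_le_of_ne hb ?_
    rintro rfl
    exact hend (h ▸ halt.coveredBy hapos (by omega))
  -- The `M`-edge at `ray d a` is the arriving one for even `a` and the departing one for odd `a`;
  -- in the second case it carries the coincidence on to the next position, which is even.
  rcases Nat.even_or_odd a with heven | hodd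
  · obtain ⟨a, rfl⟩ := Nat.exists_eq_add_one.2 hapos
    obtain ⟨b, rfl⟩ := Nat.exists_eq_add_one.2 (show 0 < b by omega)
    have hab_eq : a = b := (hreg.eq_and_eq_of_ray_succ_eq_of_odd hM hstart hstart halt halt
      (by grind) (by grind) (by omega) (by omega) h).2
    exact hne (congrArg (· + 1) hab_eq)
  · have hbodd : Odd b := by grind
    have hsucc : hreg.ray d (a + 1) = hreg.ray d (b + 1) :=
      hM.eq_of_mem_of_mem ((halt a (by omega)).2 hodd) (h ▸ (halt b hbn).2 hbodd)
    exact hne (hreg.eq_and_eq_of_ray_succ_eq_of_odd hM hstart hstart halt halt hodd hbodd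
      (by omega) hbn hsucc).2

lemma isAugPath_ray (hreg : IsTwoRegular G) (hbip : isBipartite G)
    (hM : isMatching G M) (hn : Odd n) (hstart : ¬ coveredBy M d.fst)
    (hend : ¬ coveredBy M (hreg.ray d n)) (halt : IsAlternating M (hreg.ray d) n) :
    isAugPath G M (hreg.ray d) n :=
  have hinj := hreg.injOn_ray_Iic hbip hM hn hstart hend halt
  ⟨hn, fun i _ => hreg.ray_adj d i, fun _ hi _ hj => hinj hi hj, hstart, hend, halt⟩

lemma ray_edge_mem_iff_of_coveredBy (hreg : IsTwoRegular G) (hM : isMatching G M)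
    (hcov : coveredBy M (hreg.ray d (i + 1))) :
    s(hreg.ray d (i + 1), hreg.ray d (i + 2)) ∈ M ↔ s(hreg.ray d i, hreg.ray d (i + 1)) ∉ M := by
  constructor
  · intro hnext hprev
    rw [Sym2.eq_swap] at hprev
    exact hreg.ray_add_two_ne d i (hM.eq_of_mem_of_mem hnext hprev)
  · intro hprev
    obtain ⟨_, hx, x, rfl⟩ := hcov
    rcases hreg.eq_ray_or_eq_ray_add_two (hM.1 hx) with rfl | rfl
    · exact absurd (Sym2.eq_swap ▸ hx) hprev
    · exact hx

lemma isAlternating_ray (hreg : IsTwoRegular G) (hbip : isBipartite G) (hM : isMatching G M)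
    (hd : ¬ coveredBy M d.fst) (hnoaug : ∀ l < n, ¬ isAugPath G M (hreg.ray d) l) :
    IsAlternating M (hreg.ray d) n := by
  induction n with
  | zero => exact fun i hi => absurd hi (Nat.not_lt_zero i)
  | succ n ih =>
    have halt : IsAlternating M (hreg.ray d) n := ih fun l hl => hnoaug l (by omega)
    intro i hi
    rcases Nat.lt_succ_iff_lt_or_eq.1 hi with hlt | rfl
    · exact halt i hlt
    rcases i with _ | i
    · exact iff_of_false (fun h => hd ⟨_, h, Sym2.mem_mk_left _ _⟩) (by decide)
    have hcov : coveredBy M (hreg.ray d (i + 1)) := by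
      rcases Nat.even_or_odd i with heven | hodd
      · by_contra hend
        exact hnoaug (i + 1) hi (hreg.isAugPath_ray hbip hM heven.add_one hd hend halt)
      · exact ⟨_, (halt i (by omega)).2 hodd, Sym2.mem_mk_right _ _⟩
    rw [hreg.ray_edge_mem_iff_of_coveredBy hM hcov, halt i (by omega), Nat.odd_add_one]

end Alternation

section Layers

variable {M : Set (Sym2 V)}

lemma NG_eq_image2_ray (hreg : IsTwoRegular G) (S : Set V) :
    NG G S = image2 (fun d j => hreg.ray d (2 * j + 1)) {d : G.Dart | d.fst ∈ S} (Iic 0) := by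
  ext w
  constructor
  · rintro ⟨v, hv, hvw⟩
    exact ⟨⟨(v, w), hvw⟩, hv, 0, mem_Iic.2 le_rfl, rfl⟩
  · rintro ⟨d, hd, j, hj, rfl⟩
    obtain rfl : j = 0 := Nat.le_zero.1 hj
    exact ⟨d.fst, hd, d.adj⟩

lemma NG_image2_ray (hreg : IsTwoRegular G) (D : Set G.Dart) (k : ℕ) :
    NG G (image2 (fun d j => hreg.ray d (2 * j + 2)) D (Iic k)) =
      image2 (fun d j => hreg.ray d (2 * j + 1)) D (Iic (k + 1)) := by
  ext w
  constructor
  · rintro ⟨_, ⟨d, hd, j, hj, rfl⟩, hw⟩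
    rcases hreg.eq_ray_or_eq_ray_add_two hw with rfl | rfl
    · exact ⟨d, hd, j, Nat.le_succ_of_le hj, rfl⟩
    · exact ⟨d, hd, j + 1, Nat.succ_le_succ hj, rfl⟩
  · rintro ⟨d, hd, j, hj, rfl⟩
    rcases Nat.le_succ_iff.1 hj with hjk | rfl
    · exact ⟨_, ⟨d, hd, j, hjk, rfl⟩, (hreg.ray_adj d (2 * j + 1)).symm⟩
    · exact ⟨_, ⟨d, hd, k, mem_Iic.2 le_rfl, rfl⟩, hreg.ray_adj d (2 * k + 2)⟩

lemma NM_image2_ray (hreg : IsTwoRegular G) (hM : isMatching G M) {D : Set G.Dart} {k : ℕ}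
    (halt : ∀ d ∈ D, IsAlternating M (hreg.ray d) (2 * k + 2)) :
    NM M (image2 (fun d j => hreg.ray d (2 * j + 1)) D (Iic k)) =
      image2 (fun d j => hreg.ray d (2 * j + 2)) D (Iic k) := by
  have hedge (d) (hd : d ∈ D) (j) (hj : j ≤ k) :
      s(hreg.ray d (2 * j + 1), hreg.ray d (2 * j + 2)) ∈ M :=
    (halt d hd (2 * j + 1) (by omega)).2 (odd_two_mul_add_one j)
  ext w
  constructor
  · rintro ⟨_, ⟨d, hd, j, hj, rfl⟩, hw⟩
    exact ⟨d, hd, j, hj, hM.eq_of_mem_of_mem (hedge d hd j hj) hw⟩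
  · rintro ⟨d, hd, j, hj, rfl⟩
    exact ⟨_, ⟨d, hd, j, hj, rfl⟩, hedge d hd j hj⟩

lemma Yseq_eq_image2_ray (hreg : IsTwoRegular G) (hM : isMatching G M) {S : Set V} {k : ℕ}
    (halt : ∀ d ∈ {d : G.Dart | d.fst ∈ S}, IsAlternating M (hreg.ray d) (2 * k + 2)) :
    Yseq G M S (2 * k + 2) =
      image2 (fun d j => hreg.ray d (2 * j + 2)) {d : G.Dart | d.fst ∈ S} (Iic k) := by
  induction k with
  | zero =>
    rw [Yseq_two_mul_add_two, mul_zero, Yseq, hreg.NG_eq_image2_ray, hreg.NM_image2_ray hM halt]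
  | succ k ih =>
    rw [Yseq_two_mul_add_two, mul_add_one,
      ih fun d hd i hi => halt d hd i (by omega), hreg.NG_image2_ray,
      hreg.NM_image2_ray hM halt]

lemma injOn_ray_two_mul_add_two (hreg : IsTwoRegular G) (hM : isMatching G M) {D : Set G.Dart}
    {k : ℕ} (hD : ∀ d ∈ D, ¬ coveredBy M d.fst)
    (halt : ∀ d ∈ D, IsAlternating M (hreg.ray d) (2 * k + 2)) :
    InjOn (fun x : G.Dart × ℕ => hreg.ray x.1 (2 * x.2 + 2)) (D ×ˢ Iic k) := by
  rintro ⟨d, i⟩ ⟨hd, hi⟩ ⟨e, j⟩ ⟨he, hj⟩ h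
  simp only [mem_Iic] at hi hj
  obtain ⟨rfl, hij⟩ := hreg.eq_and_eq_of_ray_succ_eq_of_odd hM (hD d hd) (hD e he) (halt d hd)
    (halt e he) (odd_two_mul_add_one i) (odd_two_mul_add_one j) (by omega) (by omega) h
  exact Prod.ext rfl (by omega)

end Layers

end IsTwoRegular

theorem stmt0_general {V : Type*} (G : SimpleGraph V) (M : Set (Sym2 V))
    (K : ℕ) (hK2 : 2 ≤ K) (hKeven : Even K)
    (hbip : isBipartite G)
    (hdeg : ∀ v : V, (G.neighborSet v).ncard = 2)
    (hM : isMatching G M)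
    (hnoaug : ∀ (p : ℕ → V) (l : ℕ), l < K → ¬ isAugPath G M p l) :
    (Yseq G M {v : V | ¬ coveredBy M v} K).encard
      = K * ({v : V | ¬ coveredBy M v}).encard := by
  have hreg : IsTwoRegular G := hdeg
  obtain ⟨m, rfl⟩ : ∃ m, K = 2 * m + 2 := by
    obtain ⟨r, rfl⟩ := hKeven
    exact ⟨r - 1, by omega⟩
  set S : Set V := {v | ¬ coveredBy M v}
  set D : Set G.Dart := {d | d.fst ∈ S}
  have hD : ∀ d ∈ D, ¬ coveredBy M d.fst := fun _ hd => hd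
  have halt (d) (hd : d ∈ D) : IsAlternating M (hreg.ray d) (2 * m + 2) :=
    hreg.isAlternating_ray hbip hM (hD d hd) fun l hl => hnoaug _ l hl
  calc (Yseq G M S (2 * m + 2)).encard
      = ((fun x : G.Dart × ℕ => hreg.ray x.1 (2 * x.2 + 2)) '' (D ×ˢ Iic m)).encard := by
        rw [hreg.Yseq_eq_image2_ray hM halt, ← image_uncurry_prod]; rfl
    _ = D.encard * (Iic m).encard := by
        rw [(hreg.injOn_ray_two_mul_add_two hM hD halt).encard_image, encard_prod]
    _ = (S.encard * 2) * (m + 1) := by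
        rw [encard_setOf_dart_fst_mem hreg.encard_neighborSet, ← Finset.coe_Iic,
          encard_coe_eq_coe_finsetCard, Nat.card_Iic]
        norm_cast
    _ = (2 * m + 2 : ℕ) * S.encard := by push_cast; ring

/-- For a finite 2-regular bipartite graph and a matching `M` with no augmenting
paths of length ≤ 2K+1 (K ≥ 2 even), `|Y_K| = K·|Y_0|` where `Y_0` is the set of uncovered
vertices and `Y_{2k+1} = N_G(Y_{2k})`, `Y_{2k+2} = N_M(Y_{2k+1})`. -/
theorem stmt0 {V : Type*} [Fintype V] (G : SimpleGraph V) (M : Set (Sym2 V))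
    (K : ℕ) (hK2 : 2 ≤ K) (hKeven : Even K)
    (hbip : isBipartite G)
    (hdeg : ∀ v : V, (G.neighborSet v).ncard = 2)
    (hM : isMatching G M)
    (hnoaug : ∀ (p : ℕ → V) (l : ℕ), l ≤ 2 * K + 1 → ¬ isAugPath G M p l) :
    (Yseq G M {v : V | ¬ coveredBy M v} K).ncard
      = K * ({v : V | ¬ coveredBy M v}).ncard := by
  rw [ncard, ncard, stmt0_general G M K hK2 hKeven hbip hdeg hM fun p l hl => hnoaug p l (by omega),
    ENat.toNat_mul, ENat.toNat_natCast]
end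

section
/- Let K ≥ 2 be an even integer, let G be a finite simple bipartite graph in which every vertex has degree exactly 2, and let M be a matching in G having no augmenting paths of length ≤ 2K+1. Then K · u ≤ |V(G)|, where u is the number of vertices of G not covered by M and V(G) is the vertex set of G. -/
/-!
Following a cycle of `G` in one direction from an uncovered vertex, the covered vertices met are
matched to each other consecutively, so the walk up to the next uncovered vertex is an augmenting
path; bipartiteness excludes that the next uncovered vertex is the starting one, reached after an
odd number of steps. Hence if there is no augmenting path of length less than `k`, the permutation
of the darts of `G` that moves each dart one step forward needs at least `k` steps to return to the
set of darts leaving an uncovered vertex. The first `k` translates of this set are then pairwise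
disjoint, and counting darts (two at each vertex) gives `k * u ≤ |V|`.
-/

open Function Finset

theorem mul_ncard_le_card_of_iterate_notMem {α : Type*} [Finite α] {f : α → α}
    (hf : Injective f) {S : Set α} {k : ℕ}
    (hS : ∀ x ∈ S, ∀ n, 0 < n → n < k → f^[n] x ∉ S) : k * S.ncard ≤ Nat.card α := by
  have eq_of_iterate_eq : ∀ x ∈ S, ∀ y ∈ S, ∀ i j, i ≤ j → j < k → f^[i] x = f^[j] y →
      i = j ∧ x = y := by
    intro x hx y hy i j hij hjk h
    have hxy : x = f^[j - i] y := by
      apply hf.iterate i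
      rw [h, ← iterate_add_apply, Nat.add_sub_cancel' hij]
    obtain rfl | hlt := hij.eq_or_lt
    · exact ⟨rfl, by simpa using hxy⟩
    · exact absurd (hxy ▸ hx) (hS y hy (j - i) (by lia) (by lia))
  have translates_injective : Injective fun a : Fin k × S ↦ f^[a.1] a.2 := by
    rintro ⟨i, x, hx⟩ ⟨j, y, hy⟩ h
    obtain hij | hji := le_total i j
    · obtain ⟨h₁, rfl⟩ := eq_of_iterate_eq x hx y hy i j hij j.2 h
      rw [Fin.ext h₁]
    · obtain ⟨h₁, rfl⟩ := eq_of_iterate_eq y hy x hx j i hji i.2 h.symm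
      rw [Fin.ext h₁]
  simpa only [Nat.card_prod, Nat.card_fin, Nat.card_coe_set_eq] using
    Nat.card_le_card_of_injective _ translates_injective

section

variable {V : Type*} {G : SimpleGraph V} {M : Set (Sym2 V)}

theorem ncard_dart_fst_mem [Finite V] {r : ℕ} (hdeg : ∀ v, (G.neighborSet v).ncard = r)
    (U : Set V) : {d : G.Dart | d.fst ∈ U}.ncard = r * U.ncard := by
  classical
  have := Fintype.ofFinite V
  have card_fiber : ∀ v ∈ U.toFinset, #{d : G.Dart | d.fst ∈ U ∧ d.fst = v} = r := by
    intro v hv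
    rw [← hdeg v, Set.ncard_eq_toFinset_card', Set.toFinset_card, G.card_neighborSet_eq_degree,
      ← G.dart_fst_fiber_card_eq_degree v]
    congr 1 with d
    simp only [mem_filter, mem_univ, true_and, and_iff_right_iff_imp]
    exact fun h ↦ h ▸ Set.mem_toFinset.1 hv
  rw [Set.ncard_eq_toFinset_card', Set.ncard_eq_toFinset_card', Set.toFinset_ofPred,
    card_eq_sum_card_fiberwise (f := fun d ↦ d.fst) (t := U.toFinset) (by simp [Set.MapsTo])]
  simp only [filter_filter]
  rw [sum_const_nat card_fiber, mul_comm]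

theorem card_dart_eq_mul [Finite V] {r : ℕ} (hdeg : ∀ v, (G.neighborSet v).ncard = r) :
    Nat.card G.Dart = r * Nat.card V := by
  simpa using ncard_dart_fst_mem hdeg Set.univ

theorem isBipartite.even_iff_even (hG : isBipartite G) {p : ℕ → V}
    (hp : ∀ i, G.Adj (p i) (p (i + 1))) {i j : ℕ} (hij : p i = p j) : Even i ↔ Even j := by
  obtain ⟨A, hA⟩ := hG
  have mem_iff : ∀ i, p i ∈ A ↔ (p 0 ∈ A ↔ Even i) := by
    intro i
    induction i with
    | zero => simp
    | succ i ih =>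
      have := hA _ _ (hp i)
      rw [Nat.even_add_one]
      tauto
  have hi := mem_iff i
  have hj := mem_iff j
  rw [hij] at hi
  tauto

namespace isMatching

theorem eq_of_mem (hM : isMatching G M) {e f : Sym2 V} {v : V} (he : e ∈ M) (hf : f ∈ M)
    (hve : v ∈ e) (hvf : v ∈ f) : e = f :=
  by_contra fun hne ↦ hM.2 e he f hf hne v ⟨hve, hvf⟩

theorem dart_eq_of_fst_eq (hM : isMatching G M) {d e : G.Dart} (hd : d.edge ∈ M)
    (he : e.edge ∈ M) (h : d.fst = e.fst) : d = e := by
  have hedge : d.edge = e.edge :=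
    hM.eq_of_mem hd he (Sym2.mem_mk_left _ _) (h ▸ Sym2.mem_mk_left _ _)
  obtain hde | rfl := (G.dart_edge_eq_iff d e).1 hedge
  · exact hde
  · exact absurd h e.snd_ne_fst

theorem dart_eq_of_snd_eq (hM : isMatching G M) {d e : G.Dart} (hd : d.edge ∈ M)
    (he : e.edge ∈ M) (h : d.snd = e.snd) : d = e := by
  rw [← d.edge_symm] at hd
  rw [← e.edge_symm] at he
  exact SimpleGraph.Dart.symm_involutive.injective (hM.dart_eq_of_fst_eq hd he h)

end isMatching

/-- The dart that follows `d` when one walks along the cycle of `G` through `d`: it leaves the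
endpoint of `d` towards the neighbour that is not the starting point of `d`. -/
noncomputable def nextDart (hG : G.IsCycles) (d : G.Dart) : G.Dart where
  fst := d.snd
  snd := (hG.other_adj_of_adj d.adj.symm).choose
  adj := (hG.other_adj_of_adj d.adj.symm).choose_spec.2

/-- The vertices met by walking along the cycle of `G` through `d`, in the direction of `d` and from
its starting point. The walk is infinite: it goes round a finite cycle again and again. -/
noncomputable def cycleWalk (hG : G.IsCycles) (d : G.Dart) (i : ℕ) : V :=
  ((nextDart hG)^[i] d).fst

section CycleWalk

variable (hG : G.IsCycles) (d : G.Dart)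

theorem nextDart_snd_ne_fst : (nextDart hG d).snd ≠ d.fst :=
  (hG.other_adj_of_adj d.adj.symm).choose_spec.1.symm

variable {d} in
theorem eq_nextDart_snd_of_adj_of_ne {x : V} (hadj : G.Adj d.snd x) (hne : x ≠ d.fst) :
    x = (nextDart hG d).snd :=
  (hG.existsUnique_ne_adj d.adj.symm).unique ⟨hne.symm, hadj⟩
    ⟨(nextDart_snd_ne_fst hG d).symm, (nextDart hG d).adj⟩

theorem nextDart_injective : Injective (nextDart hG) := by
  intro d e h
  have hsnd : d.snd = e.snd := congrArg (·.fst) h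
  have hfst : d.fst = e.fst := by
    by_contra hne
    have : d.fst = (nextDart hG e).snd := eq_nextDart_snd_of_adj_of_ne hG (hsnd ▸ d.adj.symm) hne
    exact nextDart_snd_ne_fst hG d (h ▸ this.symm)
  exact SimpleGraph.Dart.ext _ _ (Prod.ext hfst hsnd)

theorem iterate_nextDart_snd (i : ℕ) : ((nextDart hG)^[i] d).snd = cycleWalk hG d (i + 1) := by
  rw [cycleWalk, iterate_succ_apply']
  rfl

theorem edge_iterate_nextDart (i : ℕ) :
    ((nextDart hG)^[i] d).edge = s(cycleWalk hG d i, cycleWalk hG d (i + 1)) := by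
  rw [← iterate_nextDart_snd]
  rfl

theorem cycleWalk_adj (i : ℕ) : G.Adj (cycleWalk hG d i) (cycleWalk hG d (i + 1)) :=
  iterate_nextDart_snd hG d i ▸ ((nextDart hG)^[i] d).adj

variable {d}

theorem edge_nextDart_mem_iff (hM : isMatching G M) (hd : coveredBy M d.snd) :
    (nextDart hG d).edge ∈ M ↔ d.edge ∉ M := by
  constructor
  · intro hnext hmem
    have heq : d = (nextDart hG d).symm :=
      hM.dart_eq_of_snd_eq hmem ((SimpleGraph.Dart.edge_symm _).symm ▸ hnext) rfl
    exact nextDart_snd_ne_fst hG d (congrArg (·.fst) heq).symm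
  · intro hmem
    obtain ⟨e, he, hv⟩ := hd
    obtain ⟨x, rfl⟩ := Sym2.mem_iff_exists.1 hv
    have hx : x = (nextDart hG d).snd :=
      eq_nextDart_snd_of_adj_of_ne hG (hM.1 he) fun h ↦ hmem (by rwa [h, Sym2.eq_swap] at he)
    rwa [hx] at he

variable {n : ℕ}

theorem edge_iterate_nextDart_mem_iff_odd (hM : isMatching G M) (h0 : ¬ coveredBy M d.fst)
    (hcov : ∀ m, 0 < m → m < n → coveredBy M (cycleWalk hG d m)) {i : ℕ} (hi : i < n) :
    ((nextDart hG)^[i] d).edge ∈ M ↔ Odd i := by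
  induction i with
  | zero =>
    simp only [Nat.not_odd_zero, iff_false]
    exact fun h ↦ h0 ⟨_, h, Sym2.mem_mk_left _ _⟩
  | succ i ih =>
    have hsnd : coveredBy M ((nextDart hG)^[i] d).snd := by
      rw [iterate_nextDart_snd]
      exact hcov (i + 1) i.succ_pos hi
    rw [iterate_succ_apply', edge_nextDart_mem_iff hG hM hsnd, ih (Nat.lt_of_succ_lt hi),
      Nat.odd_add_one]

theorem odd_of_not_coveredBy_cycleWalk (hM : isMatching G M) (h0 : ¬ coveredBy M d.fst)
    (hcov : ∀ m, 0 < m → m < n → coveredBy M (cycleWalk hG d m)) (hpos : 0 < n)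
    (hn : ¬ coveredBy M (cycleWalk hG d n)) : Odd n := by
  obtain ⟨m, rfl⟩ := Nat.exists_eq_add_one.2 hpos
  rw [Nat.odd_add_one, ← edge_iterate_nextDart_mem_iff_odd hG hM h0 hcov m.lt_succ_self,
    edge_iterate_nextDart]
  exact fun h ↦ hn ⟨_, h, Sym2.mem_mk_right _ _⟩

theorem cycleWalk_ne_of_lt_of_lt (hbip : isBipartite G) (hM : isMatching G M)
    (h0 : ¬ coveredBy M d.fst) (hcov : ∀ m, 0 < m → m < n → coveredBy M (cycleWalk hG d m))
    {i j : ℕ} (hi : 0 < i) (hij : i < j) (hj : j < n) : cycleWalk hG d i ≠ cycleWalk hG d j := by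
  intro h
  have heven : Even i ↔ Even j := hbip.even_iff_even (cycleWalk_adj hG d) h
  have mem_iff_odd {m : ℕ} (hm : m < n) : ((nextDart hG)^[m] d).edge ∈ M ↔ Odd m :=
    edge_iterate_nextDart_mem_iff_odd hG hM h0 hcov hm
  -- By parity the two visits use the same edge of `M` in the same direction, so the whole walk has
  -- period `j - i`, although its starting point is uncovered.
  have hreturn : (nextDart hG)^[j - i] d = d := by
    obtain heven_i | hodd_i := i.even_or_odd
    · obtain ⟨i, rfl⟩ := Nat.exists_eq_add_one.2 hi
      obtain ⟨j, rfl⟩ := Nat.exists_eq_add_one.2 (hi.trans hij)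
      have hdart : (nextDart hG)^[j] d = (nextDart hG)^[i] d := by
        apply hM.dart_eq_of_snd_eq ((mem_iff_odd (by lia)).2 (by grind))
          ((mem_iff_odd (by lia)).2 (by grind))
        simpa only [iterate_nextDart_snd] using h.symm
      simpa only [Nat.add_sub_add_right] using iterate_cancel (nextDart_injective hG) hdart
    · have hdart : (nextDart hG)^[j] d = (nextDart hG)^[i] d :=
        hM.dart_eq_of_fst_eq ((mem_iff_odd hj).2 (by grind)) ((mem_iff_odd (by lia)).2 hodd_i)
          h.symm
      exact iterate_cancel (nextDart_injective hG) hdart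
  apply h0
  have := hcov (j - i) (by lia) (by lia)
  rwa [cycleWalk, hreturn] at this

theorem cycleWalk_injOn (hbip : isBipartite G) (hM : isMatching G M) (h0 : ¬ coveredBy M d.fst)
    (hcov : ∀ m, 0 < m → m < n → coveredBy M (cycleWalk hG d m))
    (hn : ¬ coveredBy M (cycleWalk hG d n)) : Set.InjOn (cycleWalk hG d) (Set.Iic n) := by
  intro i hi j hj h
  by_contra hne
  wlog hij : i < j generalizing i j
  · exact this hj hi h.symm (Ne.symm hne) (by lia)
  obtain rfl | hipos := i.eq_zero_or_pos <;> obtain rfl | hjn := (Set.mem_Iic.1 hj).eq_or_lt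
  · have hodd : Odd j := odd_of_not_coveredBy_cycleWalk hG hM h0 hcov hij hn
    have heven : Even j := (hbip.even_iff_even (cycleWalk_adj hG d) h).1 Even.zero
    exact Nat.not_even_iff_odd.2 hodd heven
  · exact h0 (h ▸ hcov j hij hjn :)
  · exact hn (h ▸ hcov i hipos hij)
  · exact cycleWalk_ne_of_lt_of_lt hG hbip hM h0 hcov hipos hij hjn h

theorem isAugPath_cycleWalk (hbip : isBipartite G) (hM : isMatching G M)
    (h0 : ¬ coveredBy M d.fst) (hcov : ∀ m, 0 < m → m < n → coveredBy M (cycleWalk hG d m))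
    (hpos : 0 < n) (hn : ¬ coveredBy M (cycleWalk hG d n)) :
    isAugPath G M (cycleWalk hG d) n := by
  refine ⟨odd_of_not_coveredBy_cycleWalk hG hM h0 hcov hpos hn, fun i _ ↦ cycleWalk_adj hG d i,
    fun i hi j hj h ↦ cycleWalk_injOn hG hbip hM h0 hcov hn hi hj h, h0, hn, fun i hi ↦ ?_⟩
  rw [← edge_iterate_nextDart]
  exact edge_iterate_nextDart_mem_iff_odd hG hM h0 hcov hi

theorem coveredBy_cycleWalk {k : ℕ} (hbip : isBipartite G) (hM : isMatching G M)
    (hnoaug : ∀ (p : ℕ → V) (l : ℕ), l < k → ¬ isAugPath G M p l) (h0 : ¬ coveredBy M d.fst)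
    (hpos : 0 < n) (hn : n < k) : coveredBy M (cycleWalk hG d n) := by
  induction n using Nat.strong_induction_on with
  | _ n ih =>
    by_contra hnot
    exact hnoaug _ n hn (isAugPath_cycleWalk hG hbip hM h0
      (fun m hm hmn ↦ ih m hmn hm (hmn.trans hn)) hpos hnot)

end CycleWalk

end

theorem stmt1_general {V : Type*} [Fintype V] (G : SimpleGraph V) (M : Set (Sym2 V)) (k : ℕ)
    (hbip : isBipartite G)
    (hdeg : ∀ v : V, (G.neighborSet v).ncard = 2)
    (hM : isMatching G M)
    (hnoaug : ∀ (p : ℕ → V) (l : ℕ), l < k → ¬ isAugPath G M p l) :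
    k * ({v : V | ¬ coveredBy M v}).ncard ≤ Fintype.card V := by
  have hG : G.IsCycles := fun v _ ↦ hdeg v
  set U := {v : V | ¬ coveredBy M v}
  have hreturn : ∀ d ∈ {d : G.Dart | d.fst ∈ U}, ∀ n, 0 < n → n < k →
      (nextDart hG)^[n] d ∉ {d : G.Dart | d.fst ∈ U} :=
    fun _ hd _ hpos hn hmem ↦ hmem (coveredBy_cycleWalk hG hbip hM hnoaug hd hpos hn)
  have : Finite G.Dart := Finite.of_injective _ SimpleGraph.Dart.toProd_injective
  have hcount := mul_ncard_le_card_of_iterate_notMem (nextDart_injective hG) hreturn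
  rw [ncard_dart_fst_mem hdeg, card_dart_eq_mul hdeg, Nat.card_eq_fintype_card] at hcount
  lia

/-- In a finite 2-regular bipartite graph with a matching `M` having no augmenting
paths of length ≤ 2K+1 (K ≥ 2 even), `K · u ≤ |V(G)|` where `u` is the number of vertices
not covered by `M`. -/
theorem stmt1 {V : Type*} [Fintype V] (G : SimpleGraph V) (M : Set (Sym2 V))
    (K : ℕ) (hK2 : 2 ≤ K) (hKeven : Even K)
    (hbip : isBipartite G)
    (hdeg : ∀ v : V, (G.neighborSet v).ncard = 2)
    (hM : isMatching G M)
    (hnoaug : ∀ (p : ℕ → V) (l : ℕ), l ≤ 2 * K + 1 → ¬ isAugPath G M p l) :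
    K * ({v : V | ¬ coveredBy M v}).ncard ≤ Fintype.card V := by
  have hbound : (2 * K + 2) * ({v : V | ¬ coveredBy M v}).ncard ≤ Fintype.card V :=
    stmt1_general G M (2 * K + 2) hbip hdeg hM fun p l hl ↦ hnoaug p l (Nat.le_of_lt_succ hl)
  exact (Nat.mul_le_mul_right _ (by lia)).trans hbound
end

section
/- Let K ≥ 2 be an even integer, let G be a finite simple bipartite graph in which every vertex has degree 1 or 2, and let M be a matching in G having no augmenting paths of length ≤ 2K+1. Then K · u ≤ |V(G)| + K · D, where u is the number of vertices of G not covered by M, V(G) is the vertex set of G, and D is the number of vertices of G of degree 1. -/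
/-! From an uncovered vertex, an alternating walk can be continued until it reaches a vertex of degree
at most one: a vertex entered through an edge outside `M` must be covered, since otherwise the walk,
which in a bipartite graph cannot meet itself, would be a short augmenting path. As degrees are at
most two, an alternating walk is determined by its last vertex when traced backwards, so the
vertices at even positions of these walks are all distinct. An uncovered vertex that admits walks of
lengths `0, 2, …, 2K - 2` accounts for `K` of these vertices; any other one reaches a vertex of
degree at most one, to which it is charged. -/

theorem encard_le_encard_of_forall_exists {α β : Type*} {s : Set α} {t : Set β}
    (R : α → β → Prop) (hex : ∀ a ∈ s, ∃ b ∈ t, R a b)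
    (huniq : ∀ a a' b, R a b → R a' b → a = a') : s.encard ≤ t.encard := by
  choose f hft hfR using hex
  refine Function.Embedding.encard_le ⟨fun a : s => (⟨f a a.2, hft a a.2⟩ : t), ?_⟩
  intro a a' h
  have hf : f a a.2 = f a' a'.2 := congrArg Subtype.val h
  exact Subtype.ext (huniq a a' _ (hfR a a.2) (hf ▸ hfR a' a'.2))

namespace isMatching

variable {V : Type*} {G : SimpleGraph V} {M : Set (Sym2 V)}

theorem eq_of_mk_mem (hM : isMatching G M) {v x y : V}
    (hx : s(v, x) ∈ M) (hy : s(v, y) ∈ M) : x = y := by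
  by_contra hne
  exact hM.2 _ hx _ hy (fun h => hne (Sym2.congr_right.mp h)) v
    ⟨Sym2.mem_mk_left v x, Sym2.mem_mk_left v y⟩

theorem exists_adj_notMem (hM : isMatching G M) {v : V}
    (hv : 1 < (G.neighborSet v).encard) : ∃ w, G.Adj v w ∧ s(v, w) ∉ M := by
  obtain ⟨x, y, hx, hy, hxy⟩ := Set.one_lt_encard_iff.mp hv
  by_cases hxM : s(v, x) ∈ M
  · exact ⟨y, hy, fun hyM => hxy (hM.eq_of_mk_mem hxM hyM)⟩
  · exact ⟨x, hx, hxM⟩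

theorem eq_of_adj_of_notMem (hM : isMatching G M) {v x y : V}
    (hdeg : (G.neighborSet v).encard ≤ 2) (hv : coveredBy M v)
    (hx : G.Adj v x) (hxM : s(v, x) ∉ M) (hy : G.Adj v y) (hyM : s(v, y) ∉ M) : x = y := by
  obtain ⟨_, hzM, z, rfl⟩ := hv
  by_contra hxy
  have hxz : x ≠ z := fun h => hxM (h ▸ hzM)
  have hyz : y ≠ z := fun h => hyM (h ▸ hzM)
  have hsub : {x, y, z} ⊆ G.neighborSet v := by
    rintro w (rfl | rfl | rfl)
    exacts [hx, hy, hM.1 hzM]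
  have hthree : ({x, y, z} : Set V).encard = 3 :=
    Set.encard_eq_three.mpr ⟨x, y, z, hxy, hxz, hyz, rfl⟩
  have : (3 : ℕ∞) ≤ 2 := hthree ▸ (Set.encard_le_encard hsub).trans hdeg
  exact absurd this (by decide)

end isMatching

/-- `p 0, …, p l` is an alternating walk of length `l` that starts at an uncovered vertex with an
edge outside `M`. Vertices may repeat, and as in `isAugPath` the values of `p` beyond `l` are
irrelevant. -/
structure IsAltWalk {V : Type*} (G : SimpleGraph V) (M : Set (Sym2 V)) (p : ℕ → V) (l : ℕ) :
    Prop where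
  not_covered_zero : ¬ coveredBy M (p 0)
  adj : ∀ i < l, G.Adj (p i) (p (i + 1))
  mem_iff_odd : ∀ i < l, (s(p i, p (i + 1)) ∈ M ↔ Odd i)

namespace IsAltWalk

variable {V : Type*} {G : SimpleGraph V} {M : Set (Sym2 V)} {p q : ℕ → V} {l m i j : ℕ}

theorem of_le (hp : IsAltWalk G M p l) (h : m ≤ l) : IsAltWalk G M p m where
  not_covered_zero := hp.not_covered_zero
  adj i hi := hp.adj i (hi.trans_le h)
  mem_iff_odd i hi := hp.mem_iff_odd i (hi.trans_le h)

theorem update_succ (hp : IsAltWalk G M p l) {x : V} (hadj : G.Adj (p l) x)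
    (hmem : s(p l, x) ∈ M ↔ Odd l) : IsAltWalk G M (Function.update p (l + 1) x) (l + 1) where
  not_covered_zero := by simpa using hp.not_covered_zero
  adj i hi := by
    obtain hi | rfl := Nat.lt_succ_iff_lt_or_eq.mp hi
    · simpa [hi.ne, (hi.trans (Nat.lt_succ_self l)).ne] using hp.adj i hi
    · simpa using hadj
  mem_iff_odd i hi := by
    obtain hi | rfl := Nat.lt_succ_iff_lt_or_eq.mp hi
    · simpa [hi.ne, (hi.trans (Nat.lt_succ_self l)).ne] using hp.mem_iff_odd i hi
    · simpa using hmem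

theorem coveredBy_of_odd (hp : IsAltWalk G M p l) (hi : i < l) (hodd : Odd i) :
    coveredBy M (p i) :=
  ⟨_, (hp.mem_iff_odd i hi).mpr hodd, Sym2.mem_mk_left _ _⟩

theorem coveredBy_succ_of_odd (hp : IsAltWalk G M p l) (hi : i < l) (hodd : Odd i) :
    coveredBy M (p (i + 1)) :=
  ⟨_, (hp.mem_iff_odd i hi).mpr hodd, Sym2.mem_mk_right _ _⟩

theorem apply_eq_of_apply_succ_eq (hM : isMatching G M)
    (hdeg : (G.neighborSet (p (i + 1))).encard ≤ 2)
    (hp : IsAltWalk G M p l) (hq : IsAltWalk G M q m) (hi : i < l) (hj : j < m)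
    (hij : Odd i ↔ Odd j) (hcov : coveredBy M (p (i + 1))) (h : p (i + 1) = q (j + 1)) :
    p i = q j := by
  have hpM := hp.mem_iff_odd i hi
  have hqM := hq.mem_iff_odd j hj
  have hqadj := (hq.adj j hj).symm
  rw [Sym2.eq_swap] at hpM hqM
  rw [← h] at hqM hqadj
  by_cases hodd : Odd i
  · exact hM.eq_of_mk_mem (hpM.mpr hodd) (hqM.mpr (hij.mp hodd))
  · exact hM.eq_of_adj_of_notMem hdeg hcov (hp.adj i hi).symm (mt hpM.mp hodd)
      hqadj (mt hqM.mp (mt hij.mpr hodd))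

theorem zero_eq_and_length_eq (hM : isMatching G M) (hdeg : ∀ v, (G.neighborSet v).encard ≤ 2)
    (hp : IsAltWalk G M p l) (hq : IsAltWalk G M q m) (hlm : Odd l ↔ Odd m)
    (hcov : Odd l → coveredBy M (p l)) (h : p l = q m) : p 0 = q 0 ∧ l = m := by
  induction l generalizing m with
  | zero =>
    cases m with
    | zero => exact ⟨h, rfl⟩
    | succ m =>
      have hm : Odd m := by grind
      exact absurd (h ▸ hq.coveredBy_succ_of_odd m.lt_succ_self hm) hp.not_covered_zero
  | succ l ih =>
    have hl : coveredBy M (p (l + 1)) := by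
      by_cases hodd : Odd l
      · exact hp.coveredBy_succ_of_odd l.lt_succ_self hodd
      · exact hcov (by grind)
    cases m with
    | zero => exact absurd (h ▸ hl) hq.not_covered_zero
    | succ m =>
      have hparity : Odd l ↔ Odd m := by grind
      have hpred : p l = q m :=
        apply_eq_of_apply_succ_eq hM (hdeg _) hp hq l.lt_succ_self m.lt_succ_self hparity hl h
      obtain ⟨hzero, hlen⟩ := ih (hp.of_le l.le_succ) (hq.of_le m.le_succ) hparity
        (hp.coveredBy_of_odd l.lt_succ_self) hpred
      exact ⟨hzero, congrArg (· + 1) hlen⟩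

theorem odd_iff_of_apply_eq (hbip : isBipartite G) (hp : IsAltWalk G M p l)
    (hi : i ≤ l) (hj : j ≤ l) (h : p i = p j) : Odd i ↔ Odd j := by
  obtain ⟨A, hA⟩ := hbip
  have hside : ∀ i ≤ l, (p i ∈ A ↔ (Odd i ↔ p 0 ∉ A)) := by
    intro i
    induction i with
    | zero => simp
    | succ i ih =>
      intro hi
      have hpi := ih (Nat.le_of_succ_le hi)
      have hswitch := hA _ _ (hp.adj i hi)
      rw [Nat.odd_add_one]
      tauto
  have hpi := hside i hi
  have hpj := hside j hj
  rw [h] at hpi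
  tauto

theorem eq_of_apply_eq (hbip : isBipartite G) (hM : isMatching G M)
    (hdeg : ∀ v, (G.neighborSet v).encard ≤ 2) (hp : IsAltWalk G M p l)
    (hi : i ≤ l) (hj : j ≤ l) (h : p i = p j) : i = j := by
  have hij := hp.odd_iff_of_apply_eq hbip hi hj h
  by_cases hcov : Odd i → coveredBy M (p i)
  · exact (zero_eq_and_length_eq hM hdeg (hp.of_le hi) (hp.of_le hj) hij hcov h).2
  · obtain ⟨hodd, hnot⟩ := Classical.not_imp.mp hcov
    have hil : i = l := hi.eq_of_not_lt fun hlt => hnot (hp.coveredBy_of_odd hlt hodd)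
    have hjl : j = l := hj.eq_of_not_lt fun hlt =>
      hnot (h ▸ hp.coveredBy_of_odd hlt (hij.mp hodd))
    exact hil.trans hjl.symm

theorem isAugPath (hbip : isBipartite G) (hM : isMatching G M)
    (hdeg : ∀ v, (G.neighborSet v).encard ≤ 2) (hp : IsAltWalk G M p l) (hl : Odd l)
    (hcov : ¬ coveredBy M (p l)) : isAugPath G M p l :=
  ⟨hl, hp.adj, fun _ hi _ hj h => hp.eq_of_apply_eq hbip hM hdeg hi hj h,
    hp.not_covered_zero, hcov, hp.mem_iff_odd⟩

end IsAltWalk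

/-- The vertex `x` is the end of an alternating walk of length `l` from the uncovered vertex `v`. -/
def AltReachable {V : Type*} (G : SimpleGraph V) (M : Set (Sym2 V)) (v : V) (l : ℕ) (x : V) :
    Prop :=
  ∃ p, IsAltWalk G M p l ∧ p 0 = v ∧ p l = x

namespace AltReachable

variable {V : Type*} {G : SimpleGraph V} {M : Set (Sym2 V)} {u v x y : V} {i j l : ℕ}

theorem refl (hv : ¬ coveredBy M v) : AltReachable G M v 0 v :=
  ⟨fun _ => v, ⟨hv, by simp, by simp⟩, rfl, rfl⟩

theorem succ (h : AltReachable G M v l x) (hadj : G.Adj x y) (hmem : s(x, y) ∈ M ↔ Odd l) :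
    AltReachable G M v (l + 1) y := by
  obtain ⟨p, hp, rfl, rfl⟩ := h
  exact ⟨Function.update p (l + 1) y, hp.update_succ hadj hmem, by simp, by simp⟩

theorem eq_and_eq (hM : isMatching G M) (hdeg : ∀ v, (G.neighborSet v).encard ≤ 2)
    (hu : AltReachable G M u (2 * i) x) (hv : AltReachable G M v (2 * j) x) : u = v ∧ i = j := by
  obtain ⟨p, hp, rfl, hpx⟩ := hu
  obtain ⟨q, hq, rfl, hqx⟩ := hv
  obtain ⟨hzero, hlen⟩ := IsAltWalk.zero_eq_and_length_eq hM hdeg hp hq (by grind) (by grind)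
    (hpx.trans hqx.symm)
  exact ⟨hzero, by lia⟩

theorem coveredBy_of_odd (hbip : isBipartite G) (hM : isMatching G M)
    (hdeg : ∀ v, (G.neighborSet v).encard ≤ 2) (hnoaug : ∀ p, ¬ isAugPath G M p l)
    (h : AltReachable G M v l x) (hl : Odd l) : coveredBy M x := by
  obtain ⟨p, hp, -, rfl⟩ := h
  by_contra hcov
  exact hnoaug p (hp.isAugPath hbip hM hdeg hl hcov)

theorem exists_add_two (hbip : isBipartite G) (hM : isMatching G M)
    (hdeg : ∀ v, (G.neighborSet v).encard ≤ 2) (hnoaug : ∀ p, ¬ isAugPath G M p (l + 1))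
    (h : AltReachable G M v l x) (hl : Even l) (hx : 1 < (G.neighborSet x).encard) :
    ∃ y, AltReachable G M v (l + 2) y := by
  obtain ⟨w, hxw, hxwM⟩ := hM.exists_adj_notMem hx
  have hw : AltReachable G M v (l + 1) w := h.succ hxw (by grind)
  obtain ⟨_, hwyM, y, rfl⟩ := hw.coveredBy_of_odd hbip hM hdeg hnoaug hl.add_one
  exact ⟨y, hw.succ (hM.1 hwyM) (iff_of_true hwyM hl.add_one)⟩

theorem exists_or_exists_encard_neighborSet_le_one (hbip : isBipartite G) (hM : isMatching G M)
    (hdeg : ∀ v, (G.neighborSet v).encard ≤ 2) {n : ℕ}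
    (hnoaug : ∀ p, ∀ l < 2 * n, ¬ isAugPath G M p l) {v : V} (hv : ¬ coveredBy M v) :
    (∃ x, AltReachable G M v (2 * n) x) ∨
      ∃ d, (G.neighborSet d).encard ≤ 1 ∧ ∃ j, AltReachable G M v (2 * j) d := by
  induction n with
  | zero => exact Or.inl ⟨v, .refl hv⟩
  | succ n ih =>
    obtain ⟨x, hx⟩ | hleaf := ih fun p l hl => hnoaug p l (by lia)
    · obtain hdx | hdx := le_or_gt (G.neighborSet x).encard 1
      · exact Or.inr ⟨x, hdx, n, hx⟩
      · exact Or.inl (hx.exists_add_two hbip hM hdeg (fun p => hnoaug p _ (by lia))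
          (even_two_mul n) hdx)
    · exact Or.inr hleaf

end AltReachable

theorem stmt2_general {V : Type*} (G : SimpleGraph V) (M : Set (Sym2 V)) (K : ℕ)
    (hbip : isBipartite G) (hdeg : ∀ v, (G.neighborSet v).encard ≤ 2) (hM : isMatching G M)
    (hnoaug : ∀ p l, l + 2 < 2 * K → ¬ isAugPath G M p l) :
    K * {v | ¬ coveredBy M v}.encard
      ≤ ENat.card V + K * {v | (G.neighborSet v).encard ≤ 1}.encard := by
  let D : Set V := {v | (G.neighborSet v).encard ≤ 1}
  let short : Set V := {v | ∃ d ∈ D, ∃ j, AltReachable G M v (2 * j) d}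
  let long : Set V := {v | ∀ i < K, ∃ x, AltReachable G M v (2 * i) x}
  have hcover : {v | ¬ coveredBy M v} ⊆ long ∪ short := fun v hv =>
    or_iff_not_imp_right.mpr fun hshort i hi =>
      (AltReachable.exists_or_exists_encard_neighborSet_le_one hbip hM hdeg
        (fun p l hl => hnoaug p l (by lia)) hv).resolve_right hshort
  have hshort : short.encard ≤ D.encard :=
    encard_le_encard_of_forall_exists (fun v d => ∃ j, AltReachable G M v (2 * j) d)
      (fun _ hv => hv) fun _ _ _ ⟨_, h⟩ ⟨_, h'⟩ => (h.eq_and_eq hM hdeg h').1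
  have hlong : (long ×ˢ (Finset.range K : Set ℕ)).encard ≤ (Set.univ : Set V).encard :=
    encard_le_encard_of_forall_exists (fun a x => AltReachable G M a.1 (2 * a.2) x)
      (fun a ha => (ha.1 a.2 (Finset.mem_range.mp ha.2)).imp fun _ h => ⟨trivial, h⟩)
      fun _ _ _ h h' => Prod.ext_iff.mpr (h.eq_and_eq hM hdeg h')
  calc (K : ℕ∞) * {v | ¬ coveredBy M v}.encard
      ≤ K * (long.encard + short.encard) := by
        gcongr
        exact (Set.encard_le_encard hcover).trans (Set.encard_union_le _ _)
    _ = (long ×ˢ (Finset.range K : Set ℕ)).encard + K * short.encard := by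
        rw [Set.encard_prod, Set.encard_coe_eq_coe_finsetCard, Finset.card_range, mul_add,
          mul_comm long.encard]
    _ ≤ ENat.card V + K * D.encard := by
        rw [← Set.encard_univ]
        gcongr

/-- In a finite bipartite graph all of whose vertices have degree 1 or 2, with a
matching `M` having no augmenting paths of length ≤ 2K+1 (K ≥ 2 even),
`K · u ≤ |V(G)| + K · D` where `u` is the number of uncovered vertices and `D` the number
of degree-1 vertices. -/
theorem stmt2 {V : Type*} [Fintype V] (G : SimpleGraph V) (M : Set (Sym2 V))
    (K : ℕ) (hK2 : 2 ≤ K) (hKeven : Even K)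
    (hbip : isBipartite G)
    (hdeg : ∀ v : V, (G.neighborSet v).ncard = 1 ∨ (G.neighborSet v).ncard = 2)
    (hM : isMatching G M)
    (hnoaug : ∀ (p : ℕ → V) (l : ℕ), l ≤ 2 * K + 1 → ¬ isAugPath G M p l) :
    K * ({v : V | ¬ coveredBy M v}).ncard
      ≤ Fintype.card V + K * ({v : V | (G.neighborSet v).ncard = 1}).ncard := by
  have hcast (s : Set V) : s.encard = s.ncard := (Set.coe_ncard_eq_encard s).symm
  have hone (v : V) : (G.neighborSet v).ncard ≤ 1 ↔ (G.neighborSet v).ncard = 1 := by grind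
  have h := stmt2_general G M K hbip (by simp only [hcast]; norm_cast; grind) hM
    fun p l hl => hnoaug p l (by lia)
  simp only [hcast, Nat.cast_le_one, hone, ENat.card_eq_coe_fintype_card] at h
  exact_mod_cast h
end

section
/- Let K ≥ 2 be an even integer, let G be a finite simple bipartite graph in which every vertex has degree exactly 2, let M be a matching in G having no augmenting paths of length ≤ 2K+1, and let v be a vertex not covered by M. Then for every odd l with 1 ≤ l ≤ K−1, every vertex of X_l(v) is covered by M. -/
/-!
A vertex of `Y_l(S)` ends a walk of length `l` from `S` whose odd steps lie in `M`. For an uncovered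
vertex, take the least odd `l` that works. Two equal vertices on the walk would have indices of the
same parity, as `G` is bipartite, so the closed piece between them could be cut out, contradicting
the choice of `l`. So the walk is a path, and its even steps cannot lie in `M`: such an edge would
cover the start or share a vertex with the preceding step. Hence the walk is an augmenting path.
-/

section

variable {V : Type*} {G : SimpleGraph V} {M : Set (Sym2 V)} {S : Set V} {p : ℕ → V} {n : ℕ}

theorem isMatching.eq_of_mem_of_mem_s3 (hM : isMatching G M) {a b c : V}
    (hab : s(a, b) ∈ M) (hac : s(a, c) ∈ M) : b = c := by
  by_contra hbc
  exact hM.2 _ hab _ hac (mt Sym2.congr_right.1 hbc) a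
    ⟨Sym2.mem_mk_left a b, Sym2.mem_mk_left a c⟩

theorem isBipartite.even_iff_even_of_eq (hG : isBipartite G)
    (hp : ∀ i < n, G.Adj (p i) (p (i + 1))) {i j : ℕ} (hi : i ≤ n) (hj : j ≤ n)
    (hij : p i = p j) : Even i ↔ Even j := by
  obtain ⟨A, hA⟩ := hG
  have side_eq : ∀ k ≤ n, (p k ∈ A ↔ (Even k ↔ p 0 ∈ A)) := by
    intro k hk
    induction k with
    | zero => simp
    | succ k ih =>
      have hk_side := ih (by omega)
      have hk_adj := hA _ _ (hp k hk)
      rw [Nat.even_add_one]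
      tauto
  have hi_side := side_eq i hi
  have hj_side := side_eq j hj
  rw [hij] at hi_side
  tauto

/-- The relation between consecutive vertices, at positions `i` and `i + 1`, that defines the layers
`Y_i` and `Y_{i+1}`: an edge of `G` for even `i`, which may lie in `M`, and an edge of `M` for
odd `i`. -/
def IsAltStep (G : SimpleGraph V) (M : Set (Sym2 V)) (i : ℕ) (a b : V) : Prop :=
  if Even i then G.Adj a b else s(a, b) ∈ M

/-- `p 0, …, p n` is a walk through successive layers: every odd step lies in `M`, but the even ones
need not avoid `M` and vertices may repeat. As in `isAugPath`, only the values of `p` up to `n`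
matter. -/
def IsAltWalk_s3 (G : SimpleGraph V) (M : Set (Sym2 V)) (p : ℕ → V) (n : ℕ) : Prop :=
  ∀ i < n, IsAltStep G M i (p i) (p (i + 1))

theorem isAltStep_congr {i j : ℕ} (hij : Even i ↔ Even j) {a b : V} :
    IsAltStep G M i a b ↔ IsAltStep G M j a b := by
  simp only [IsAltStep, hij]

theorem IsAltStep.adj (hM : M ⊆ G.edgeSet) {i : ℕ} {a b : V} (h : IsAltStep G M i a b) :
    G.Adj a b := by
  unfold IsAltStep at h
  split_ifs at h
  · exact h
  · exact hM h

theorem IsAltStep.mem_of_odd {i : ℕ} {a b : V} (h : IsAltStep G M i a b) (hi : Odd i) :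
    s(a, b) ∈ M := by
  rwa [IsAltStep, if_neg (Nat.not_even_iff_odd.2 hi)] at h

theorem mem_Yseq_succ {l : ℕ} {w : V} :
    w ∈ Yseq G M S (l + 1) ↔ ∃ u ∈ Yseq G M S l, IsAltStep G M l u w := by
  by_cases hl : Even l <;> simp [Yseq, IsAltStep, NG, NM, hl]

theorem exists_isAltWalk_of_mem_Yseq {u : V} (hu : u ∈ Yseq G M S n) :
    ∃ p, IsAltWalk_s3 G M p n ∧ p 0 ∈ S ∧ p n = u := by
  induction n generalizing u with
  | zero => exact ⟨fun _ => u, fun i hi => absurd hi i.not_lt_zero, hu, rfl⟩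
  | succ n ih =>
    obtain ⟨w, hw, hstep⟩ := mem_Yseq_succ.1 hu
    obtain ⟨p, hp, hp0, rfl⟩ := ih hw
    refine ⟨Function.update p (n + 1) u, fun i hi => ?_, ?_, Function.update_self ..⟩
    · rw [Function.update_of_ne hi.ne]
      rcases Nat.lt_succ_iff_lt_or_eq.1 hi with hlt | rfl
      · rw [Function.update_of_ne (by omega)]
        exact hp i hlt
      · rwa [Function.update_self]
    · rwa [Function.update_of_ne n.succ_ne_zero.symm]

namespace IsAltWalk_s3

theorem mem_Yseq_add (hp : IsAltWalk_s3 G M p n) {i m : ℕ} (him : Even i ↔ Even m)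
    (hi : p i ∈ Yseq G M S m) {k : ℕ} (hk : i + k ≤ n) : p (i + k) ∈ Yseq G M S (m + k) := by
  induction k with
  | zero => exact hi
  | succ k ih =>
    have hpar : Even (i + k) ↔ Even (m + k) := by rw [Nat.even_add, Nat.even_add, him]
    exact mem_Yseq_succ.2 ⟨p (i + k), ih (by omega), (isAltStep_congr hpar).1 (hp (i + k) hk)⟩

theorem mem_Yseq (hp : IsAltWalk_s3 G M p n) (hp0 : p 0 ∈ S) {i : ℕ} (hi : i ≤ n) :
    p i ∈ Yseq G M S i := by
  simpa only [zero_add] using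
    hp.mem_Yseq_add (m := 0) Iff.rfl hp0 (k := i) (by omega)

theorem injOn_of_forall_notMem_Yseq (hp : IsAltWalk_s3 G M p n) (hG : isBipartite G)
    (hM : M ⊆ G.edgeSet) (hp0 : p 0 ∈ S)
    (hmin : ∀ m < n, (Even m ↔ Even n) → p n ∉ Yseq G M S m) : Set.InjOn p (Set.Iic n) := by
  have ne_of_lt : ∀ i j, i < j → j ≤ n → p i ≠ p j := by
    intro i j hij hj heq
    have hpar : Even i ↔ Even j :=
      hG.even_iff_even_of_eq (fun k hk => (hp k hk).adj hM) (hij.le.trans hj) hj heq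
    have hj_mem : p j ∈ Yseq G M S i := heq ▸ hp.mem_Yseq hp0 (hij.le.trans hj)
    have hn_mem : p n ∈ Yseq G M S (i + (n - j)) := by
      simpa only [Nat.add_sub_cancel' hj] using
        hp.mem_Yseq_add hpar.symm hj_mem (k := n - j) (by omega)
    refine hmin _ (by omega) ?_ hn_mem
    rw [Nat.even_add, hpar, ← Nat.even_add, Nat.add_sub_cancel' hj]
  intro i hi j hj heq
  rcases lt_trichotomy i j with hlt | rfl | hlt
  · exact absurd heq (ne_of_lt i j hlt hj)
  · rfl
  · exact absurd heq.symm (ne_of_lt j i hlt hi)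

theorem isAugPath_of_injOn (hp : IsAltWalk_s3 G M p n) (hM : isMatching G M) (hn : Odd n)
    (hinj : Set.InjOn p (Set.Iic n)) (hp0 : ¬ coveredBy M (p 0)) (hpn : ¬ coveredBy M (p n)) :
    isAugPath G M p n := by
  refine ⟨hn, fun i hi => (hp i hi).adj hM.1, fun i hi j hj => hinj hi hj, hp0, hpn,
    fun i hi => ⟨fun hmem => ?_, (hp i hi).mem_of_odd⟩⟩
  by_contra hi_odd
  cases i with
  | zero => exact hp0 ⟨_, hmem, Sym2.mem_mk_left ..⟩
  | succ i =>
    have hprev : s(p (i + 1), p i) ∈ M := by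
      rw [Sym2.eq_swap]
      exact (hp i (by omega)).mem_of_odd (by simpa only [Nat.odd_add_one, not_not] using hi_odd)
    have heq : p i = p (i + 1 + 1) := hM.eq_of_mem_of_mem_s3 hprev hmem
    have : i = i + 1 + 1 := hinj (Set.mem_Iic.2 (by omega)) (Set.mem_Iic.2 hi) heq
    omega

end IsAltWalk_s3

theorem exists_isAugPath_of_mem_Yseq (hG : isBipartite G) (hM : isMatching G M)
    (hS : ∀ v ∈ S, ¬ coveredBy M v) {l : ℕ} (hl : Odd l) {u : V} (hu : u ∈ Yseq G M S l)
    (hu_unc : ¬ coveredBy M u) : ∃ p, ∃ m ≤ l, isAugPath G M p m := by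
  induction l using Nat.strong_induction_on with
  | _ l ih =>
    by_cases hshort : ∃ m < l, Odd m ∧ u ∈ Yseq G M S m
    · obtain ⟨m, hml, hm, hum⟩ := hshort
      obtain ⟨p, k, hkm, hp⟩ := ih m hml hm hum
      exact ⟨p, k, hkm.trans hml.le, hp⟩
    · obtain ⟨p, hp, hp0, rfl⟩ := exists_isAltWalk_of_mem_Yseq hu
      have hinj : Set.InjOn p (Set.Iic l) :=
        hp.injOn_of_forall_notMem_Yseq hG hM.1 hp0 fun m hm hpar hmem =>
          hshort ⟨m, hm, by rwa [← Nat.not_even_iff_odd, hpar, Nat.not_even_iff_odd], hmem⟩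
      exact ⟨p, l, le_rfl, hp.isAugPath_of_injOn hM hl hinj (hS _ hp0) hu_unc⟩

theorem stmt3_general (hG : isBipartite G) (hM : isMatching G M) {L : ℕ}
    (hnoaug : ∀ (p : ℕ → V) (l : ℕ), l ≤ L → ¬ isAugPath G M p l)
    (hS : ∀ v ∈ S, ¬ coveredBy M v) {l : ℕ} (hl : Odd l) (hlL : l ≤ L) {u : V}
    (hu : u ∈ Yseq G M S l) : coveredBy M u := by
  by_contra hu_unc
  obtain ⟨p, m, hml, hp⟩ := exists_isAugPath_of_mem_Yseq hG hM hS hl hu hu_unc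
  exact hnoaug p m (hml.trans hlL) hp

end

/-- In a finite 2-regular bipartite graph with matching `M` having no augmenting
paths of length ≤ 2K+1 (K ≥ 2 even) and `v` uncovered, for every odd `l` with
`1 ≤ l ≤ K-1` every vertex of `X_l(v)` is covered by `M`. -/
theorem stmt3 {V : Type*} [Fintype V] (G : SimpleGraph V) (M : Set (Sym2 V))
    (K : ℕ) (hK2 : 2 ≤ K) (hKeven : Even K)
    (hbip : isBipartite G)
    (hdeg : ∀ v : V, (G.neighborSet v).ncard = 2)
    (hM : isMatching G M)
    (hnoaug : ∀ (p : ℕ → V) (l : ℕ), l ≤ 2 * K + 1 → ¬ isAugPath G M p l)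
    (v : V) (hv : ¬ coveredBy M v) :
    ∀ l : ℕ, Odd l → 1 ≤ l → l ≤ K - 1 →
      ∀ u ∈ Yseq G M {v} l, coveredBy M u := by
  intro l hl _ hlK u hu
  exact stmt3_general hbip hM hnoaug (by simpa using hv) hl (by omega) hu
end

section
/- Let G be a simple graph, M a matching in G, and p = v_0 v_1 … v_l an M-augmenting path. Let E(p) denote the set of edges of p. Then the symmetric difference M △ E(p) is again a matching in G, and the set of vertices covered by M △ E(p) equals the set of vertices covered by M together with v_0 and v_l. -/
/-
Flipping keeps the edges of `M` off the path and adds the even-indexed edges of the path. The edges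
of `M` on the path are the odd-indexed ones, which cover exactly the interior vertices, so no other
edge of `M` meets the interior; the endpoints meet no edge of `M` at all. As `l` is odd, the
even-indexed edges are pairwise disjoint and cover every vertex of the path: flipping thus replaces
the interior of the path by the whole path in the covered set, and changes nothing elsewhere.
-/

section Coverage

variable {V : Type*} {M N P : Set (Sym2 V)} {v : V}

theorem coveredBy.mono (hMN : M ⊆ N) : coveredBy M v → coveredBy N v :=
  fun ⟨e, he, hv⟩ ↦ ⟨e, hMN he, hv⟩

theorem coveredBy_union : coveredBy (M ∪ N) v ↔ coveredBy M v ∨ coveredBy N v := by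
  simp only [coveredBy, Set.mem_union, or_and_right, exists_or]

theorem coveredBy_sdiff_or_inter :
    coveredBy (M \ P) v ∨ coveredBy (M ∩ P) v ↔ coveredBy M v := by
  rw [← coveredBy_union, Set.sdiff_union_inter]

end Coverage

namespace isMatching

variable {V : Type*} {G : SimpleGraph V} {M N P : Set (Sym2 V)} {v : V}

theorem mono (hM : isMatching G M) (hNM : N ⊆ M) : isMatching G N :=
  ⟨hNM.trans hM.1, fun e he f hf ↦ hM.2 e (hNM he) f (hNM hf)⟩

theorem union (hM : isMatching G M) (hN : isMatching G N)
    (hMN : ∀ v, coveredBy N v → ¬ coveredBy M v) : isMatching G (M ∪ N) := by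
  refine ⟨Set.union_subset hM.1 hN.1, ?_⟩
  rintro e (he | he) f (hf | hf) hef v ⟨hve, hvf⟩
  · exact hM.2 e he f hf hef v ⟨hve, hvf⟩
  · exact hMN v ⟨f, hf, hvf⟩ ⟨e, he, hve⟩
  · exact hMN v ⟨e, he, hve⟩ ⟨f, hf, hvf⟩
  · exact hN.2 e he f hf hef v ⟨hve, hvf⟩

theorem not_coveredBy_sdiff_of_coveredBy_inter (hM : isMatching G M)
    (hv : coveredBy (M ∩ P) v) : ¬ coveredBy (M \ P) v := by
  obtain ⟨e, ⟨heM, heP⟩, hve⟩ := hv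
  rintro ⟨f, ⟨hfM, hfP⟩, hvf⟩
  exact hM.2 e heM f hfM (ne_of_mem_of_not_mem heP hfP) v ⟨hve, hvf⟩

end isMatching

section EvenPathEdges

variable {V : Type*} {G : SimpleGraph V} {p : ℕ → V} {l : ℕ} {v : V}

/-- The edges `s(p 0, p 1), s(p 2, p 3), …` of even index of the path `p 0, …, p l`. For an
augmenting path these are the edges that flipping adds to the matching. -/
def evenPathEdges (p : ℕ → V) (l : ℕ) : Set (Sym2 V) :=
  {e | ∃ i < l, Even i ∧ e = s(p i, p (i + 1))}

theorem isMatching_evenPathEdges (hadj : ∀ i < l, G.Adj (p i) (p (i + 1)))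
    (hinj : Set.InjOn p (Set.Icc 0 l)) : isMatching G (evenPathEdges p l) := by
  have index_of_mem {a i : ℕ} (ha : a ≤ l) (hi : i < l) (h : p a ∈ s(p i, p (i + 1))) :
      a = i ∨ a = i + 1 :=
    (Sym2.mem_iff.1 h).imp (hinj ⟨a.zero_le, ha⟩ ⟨i.zero_le, hi.le⟩)
      (hinj ⟨a.zero_le, ha⟩ ⟨(i + 1).zero_le, hi⟩)
  refine ⟨?_, ?_⟩
  · rintro _ ⟨i, hi, -, rfl⟩
    exact hadj i hi
  · rintro _ ⟨i, hi, hi_even, rfl⟩ _ ⟨j, hj, hj_even, rfl⟩ hne v ⟨hvi, hvj⟩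
    have hij : i = j := by
      rcases Sym2.mem_iff.1 hvi with rfl | rfl
      · have i_eq : i = j ∨ i = j + 1 := index_of_mem hi.le hj hvj
        grind
      · have i_succ_eq : i + 1 = j ∨ i + 1 = j + 1 := index_of_mem hi hj hvj
        grind
    exact hne (by rw [hij])

theorem coveredBy_evenPathEdges_iff (hl : Odd l) :
    coveredBy (evenPathEdges p l) v ↔ v ∈ p '' Set.Icc 0 l := by
  constructor
  · rintro ⟨_, ⟨i, hi, -, rfl⟩, hv⟩
    rcases Sym2.mem_iff.1 hv with rfl | rfl
    · exact ⟨i, ⟨i.zero_le, hi.le⟩, rfl⟩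
    · exact ⟨i + 1, ⟨(i + 1).zero_le, hi⟩, rfl⟩
  · rintro ⟨i, ⟨-, hi⟩, rfl⟩
    rcases Nat.even_or_odd i with hi_even | ⟨k, rfl⟩
    · have hil : i < l := hi.lt_of_ne (by grind)
      exact ⟨_, ⟨i, hil, hi_even, rfl⟩, Sym2.mem_mk_left _ _⟩
    · exact ⟨_, ⟨2 * k, hi, even_two_mul k, rfl⟩, Sym2.mem_mk_right _ _⟩

end EvenPathEdges

theorem mem_image_Icc_iff {α β : Type*} [PartialOrder α] {a b : α} (hab : a ≤ b) (f : α → β)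
    {y : β} : y ∈ f '' Set.Icc a b ↔ y ∈ f '' Set.Ioo a b ∨ y = f a ∨ y = f b := by
  rw [← Set.Ioo_union_both hab, Set.image_union, Set.image_pair, Set.mem_union,
    Set.mem_insert_iff, Set.mem_singleton_iff]

namespace isAugPath

variable {V : Type*} {G : SimpleGraph V} {M : Set (Sym2 V)} {p : ℕ → V} {l : ℕ} {v : V}

theorem odd_length (hp : isAugPath G M p l) : Odd l := hp.1

theorem adj (hp : isAugPath G M p l) {i : ℕ} (hi : i < l) : G.Adj (p i) (p (i + 1)) :=
  hp.2.1 i hi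

theorem injOn (hp : isAugPath G M p l) : Set.InjOn p (Set.Icc 0 l) :=
  fun i hi j hj ↦ hp.2.2.1 i hi.2 j hj.2

theorem not_coveredBy_head (hp : isAugPath G M p l) : ¬ coveredBy M (p 0) := hp.2.2.2.1

theorem not_coveredBy_last (hp : isAugPath G M p l) : ¬ coveredBy M (p l) := hp.2.2.2.2.1

theorem mem_iff_odd (hp : isAugPath G M p l) {i : ℕ} (hi : i < l) :
    s(p i, p (i + 1)) ∈ M ↔ Odd i :=
  hp.2.2.2.2.2 i hi

theorem pathEdges_sdiff (hp : isAugPath G M p l) : pathEdges p l \ M = evenPathEdges p l := by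
  ext e
  constructor
  · rintro ⟨⟨i, hi, rfl⟩, he⟩
    exact ⟨i, hi, Nat.not_odd_iff_even.1 (mt (hp.mem_iff_odd hi).2 he), rfl⟩
  · rintro ⟨i, hi, hi_even, rfl⟩
    exact ⟨⟨i, hi, rfl⟩, mt (hp.mem_iff_odd hi).1 (Nat.not_odd_iff_even.2 hi_even)⟩

theorem coveredBy_inter_pathEdges_iff (hp : isAugPath G M p l) :
    coveredBy (M ∩ pathEdges p l) v ↔ v ∈ p '' Set.Ioo 0 l := by
  have odd_edge_mem {i : ℕ} (hi : i < l) (hi_odd : Odd i) :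
      s(p i, p (i + 1)) ∈ M ∩ pathEdges p l :=
    ⟨(hp.mem_iff_odd hi).2 hi_odd, i, hi, rfl⟩
  constructor
  · rintro ⟨_, ⟨heM, i, hi, rfl⟩, hv⟩
    have hi_odd : Odd i := (hp.mem_iff_odd hi).1 heM
    rcases Sym2.mem_iff.1 hv with rfl | rfl
    · exact ⟨i, ⟨hi_odd.pos, hi⟩, rfl⟩
    · have hil : i + 1 ≠ l := by
        rintro rfl
        exact Nat.not_odd_iff_even.2 hi_odd.add_one hp.odd_length
      exact ⟨i + 1, ⟨i.succ_pos, lt_of_le_of_ne hi hil⟩, rfl⟩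
  · rintro ⟨i, ⟨hi_pos, hi⟩, rfl⟩
    rcases Nat.even_or_odd i with hi_even | hi_odd
    · obtain ⟨k, rfl⟩ := Nat.exists_eq_add_one.2 hi_pos
      have hk_odd : Odd k := by grind
      exact ⟨_, odd_edge_mem (k.lt_succ_self.trans hi) hk_odd, Sym2.mem_mk_right _ _⟩
    · exact ⟨_, odd_edge_mem hi hi_odd, Sym2.mem_mk_left _ _⟩

theorem not_coveredBy_sdiff_pathEdges (hp : isAugPath G M p l) (hM : isMatching G M)
    (hv : v ∈ p '' Set.Icc 0 l) : ¬ coveredBy (M \ pathEdges p l) v := by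
  rcases (mem_image_Icc_iff l.zero_le p).1 hv with hv | rfl | rfl
  · exact hM.not_coveredBy_sdiff_of_coveredBy_inter (hp.coveredBy_inter_pathEdges_iff.2 hv)
  · exact mt (coveredBy.mono Set.sdiff_subset) hp.not_coveredBy_head
  · exact mt (coveredBy.mono Set.sdiff_subset) hp.not_coveredBy_last

theorem symmDiff_pathEdges (hp : isAugPath G M p l) :
    symmDiff M (pathEdges p l) = M \ pathEdges p l ∪ evenPathEdges p l := by
  rw [Set.symmDiff_def, hp.pathEdges_sdiff]

theorem isMatching_symmDiff (hp : isAugPath G M p l) (hM : isMatching G M) :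
    isMatching G (symmDiff M (pathEdges p l)) := by
  rw [hp.symmDiff_pathEdges]
  refine (hM.mono Set.sdiff_subset).union
    (isMatching_evenPathEdges (fun _ ↦ hp.adj) hp.injOn) fun v hv ↦ ?_
  rw [coveredBy_evenPathEdges_iff hp.odd_length] at hv
  exact hp.not_coveredBy_sdiff_pathEdges hM hv

theorem coveredBy_symmDiff_iff (hp : isAugPath G M p l) :
    coveredBy (symmDiff M (pathEdges p l)) v ↔ coveredBy M v ∨ v = p 0 ∨ v = p l :=
  calc
    _ ↔ coveredBy (M \ pathEdges p l) v ∨ v ∈ p '' Set.Icc 0 l := by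
      rw [hp.symmDiff_pathEdges, coveredBy_union, coveredBy_evenPathEdges_iff hp.odd_length]
    _ ↔ (coveredBy (M \ pathEdges p l) v ∨ v ∈ p '' Set.Ioo 0 l) ∨ v = p 0 ∨ v = p l := by
      rw [mem_image_Icc_iff l.zero_le, or_assoc]
    _ ↔ coveredBy M v ∨ v = p 0 ∨ v = p l := by
      rw [← hp.coveredBy_inter_pathEdges_iff, coveredBy_sdiff_or_inter]

end isAugPath

/-- Flipping an augmenting path `p` for a matching `M` yields a matching
`M △ E(p)` covering exactly the vertices covered by `M` together with the two endpoints. -/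
theorem stmt8 {V : Type*} (G : SimpleGraph V) (M : Set (Sym2 V))
    (hM : isMatching G M) (p : ℕ → V) (l : ℕ) (hp : isAugPath G M p l) :
    isMatching G (symmDiff M (pathEdges p l)) ∧
    ∀ v : V, coveredBy (symmDiff M (pathEdges p l)) v ↔
      (coveredBy M v ∨ v = p 0 ∨ v = p l) := by
  exact ⟨hp.isMatching_symmDiff hM, fun _ ↦ hp.coveredBy_symmDiff_iff⟩
end

section
/- Let G be a simple graph, L ∈ ℕ, and let (M_k)_{k ∈ ℕ} be a sequence of matchings in G such that for every k there is a family P_k of pairwise vertex-disjoint M_k-augmenting paths, each of length at most L, with M_{k+1} = M_k △ ⋃_{p ∈ P_k} E(p). Then for every edge e = {a, b} of G whose ball B_L(a) = {x : x is the endpoint of some walk in G starting at a of length ≤ L} is finite, the number of indices k for which e lies on some path of P_k is finite; in fact, 2 · |{k : e ∈ ⋃_{p ∈ P_k} E(p)}| ≤ |B_L(a)|. -/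
section Counting

variable {ι α : Type*}

theorem pairwise_disjoint_sdiff_succ [LinearOrder ι] [SuccOrder ι] [GeneralizedBooleanAlgebra α]
    {f : ι → α} (hf : Monotone f) :
    Pairwise fun i j ↦ Disjoint (f (Order.succ i) \ f i) (f (Order.succ j) \ f j) :=
  (pairwise_disjoint_on _).2 fun _ _ hij ↦
    disjoint_sdiff_self_right.mono_left (sdiff_le.trans (hf (Order.succ_le_of_lt hij)))

variable {s : Set ι} {t : Set α} {f : ι → Set α}

theorem finite_of_pairwiseDisjoint_nonempty (ht : t.Finite) (hdisj : s.PairwiseDisjoint f)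
    (hsub : ∀ i ∈ s, f i ⊆ t) (hne : ∀ i ∈ s, (f i).Nonempty) : s.Finite :=
  ((hdisj.finite_biUnion_iff.1 (ht.subset (Set.iUnion₂_subset hsub))).2).subset
    fun i hi ↦ ⟨hi, hne i hi⟩

theorem mul_ncard_le_ncard_of_pairwiseDisjoint {n : ℕ} (hs : s.Finite) (ht : t.Finite)
    (hdisj : s.PairwiseDisjoint f) (hsub : ∀ i ∈ s, f i ⊆ t) (hcard : ∀ i ∈ s, n ≤ (f i).ncard) :
    n * s.ncard ≤ t.ncard := by
  lift s to Finset ι using hs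
  calc n * (s : Set ι).ncard
      = ∑ _i ∈ s, n := by rw [Set.ncard_coe_finset, Finset.sum_const, smul_eq_mul, mul_comm]
    _ ≤ ∑ i ∈ s, (f i).ncard := Finset.sum_le_sum hcard
    _ = (⋃ i ∈ (s : Set ι), f i).ncard := by
      rw [s.finite_toSet.ncard_biUnion (fun i hi ↦ ht.subset (hsub i hi)) hdisj,
        finsum_mem_coe_finset]
    _ ≤ t.ncard := Set.ncard_le_ncard (Set.iUnion₂_subset hsub) ht

end Counting

section Paths

variable {V : Type*} {G : SimpleGraph V} {M : Set (Sym2 V)} {p : ℕ → V} {l : ℕ}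

/-- The closed ball of radius `r` around `a` for the walk distance. (Mathlib's `SimpleGraph.ball`
is the open ball.) -/
def walkBall (G : SimpleGraph V) (a : V) (r : ℕ) : Set V :=
  {x | ∃ w : G.Walk a x, w.length ≤ r}

theorem walkBall_mono (G : SimpleGraph V) (a : V) : Monotone (walkBall G a) :=
  fun _ _ hrs _ ⟨w, hw⟩ ↦ ⟨w, hw.trans hrs⟩

theorem exists_walk_length_eq_sub (hp : ∀ i < l, G.Adj (p i) (p (i + 1))) {i j : ℕ}
    (hij : i ≤ j) (hj : j ≤ l) : ∃ w : G.Walk (p i) (p j), w.length = j - i := by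
  induction j, hij using Nat.le_induction with
  | base => exact ⟨.nil, (Nat.sub_self i).symm⟩
  | succ j hij ih =>
    obtain ⟨w, hw⟩ := ih (Nat.le_of_succ_le hj)
    exact ⟨w.concat (hp j hj), by rw [SimpleGraph.Walk.length_concat, hw, Nat.sub_add_comm hij]⟩

theorem exists_eq_of_mem_pathEdges {e : Sym2 V} {v : V} (he : e ∈ pathEdges p l) (hv : v ∈ e) :
    ∃ j ≤ l, p j = v := by
  obtain ⟨i, hi, rfl⟩ := he
  rcases Sym2.mem_iff.1 hv with rfl | rfl
  · exact ⟨i, hi.le, rfl⟩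
  · exact ⟨i + 1, hi, rfl⟩

theorem setOf_mem_pathEdges_subset_setOf_eq {ι : Type*} (P : ι → Set ((ℕ → V) × ℕ)) (a b : V) :
    {k | ∃ q ∈ P k, s(a, b) ∈ pathEdges q.1 q.2} ⊆ {k | ∃ q ∈ P k, ∃ j ≤ q.2, q.1 j = a} :=
  fun _ ⟨q, hq, he⟩ ↦ ⟨q, hq, exists_eq_of_mem_pathEdges he (Sym2.mem_mk_left a b)⟩

namespace isAugPath

theorem mem_walkBall (h : isAugPath G M p l) {i j : ℕ} (hi : i ≤ l) (hj : j ≤ l) :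
    p j ∈ walkBall G (p i) l := by
  obtain ⟨-, hadj, -⟩ := h
  rcases le_total i j with hij | hji
  · obtain ⟨w, hw⟩ := exists_walk_length_eq_sub hadj hij hj
    exact ⟨w, by lia⟩
  · obtain ⟨w, hw⟩ := exists_walk_length_eq_sub hadj hji hi
    exact ⟨w.reverse, by rw [SimpleGraph.Walk.length_reverse]; lia⟩

theorem start_ne_end (h : isAugPath G M p l) : p 0 ≠ p l := by
  obtain ⟨hodd, -, hinj, -⟩ := h
  exact fun h0l ↦ hodd.pos.ne (hinj 0 l.zero_le l le_rfl h0l)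

theorem exists_mem_pathEdges_notMem (h : isAugPath G M p l) {j : ℕ} (hj : j ≤ l) :
    ∃ e ∈ pathEdges p l, e ∉ M ∧ p j ∈ e := by
  obtain ⟨hodd, -, -, -, -, halt⟩ := h
  rcases j.even_or_odd with heven | ⟨i, rfl⟩
  · have hjl : j < l := lt_of_le_of_ne hj fun hjl ↦ Nat.not_odd_iff_even.2 heven (hjl ▸ hodd)
    exact ⟨s(p j, p (j + 1)), ⟨j, hjl, rfl⟩, by rwa [halt j hjl, Nat.not_odd_iff_even],
      Sym2.mem_mk_left _ _⟩
  · exact ⟨s(p (2 * i), p (2 * i + 1)), ⟨2 * i, hj, rfl⟩,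
      by rw [halt (2 * i) hj, Nat.not_odd_iff_even]; exact even_two_mul i, Sym2.mem_mk_right _ _⟩

end isAugPath

end Paths

section Flip

variable {V : Type*} {G : SimpleGraph V} {M : Set (Sym2 V)} {P : Set ((ℕ → V) × ℕ)}
  {q : (ℕ → V) × ℕ}

/-- The set of vertices covered by `M`, as a set rather than a predicate. -/
def coveredVerts (M : Set (Sym2 V)) : Set V := {v | coveredBy M v}

/-- The set of edges obtained from `M` by flipping the paths of the family `P`, where `(p, l) ∈ P`
stands for the path `p 0, …, p l`. An edge on several paths of `P` is flipped only once. -/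
def flipPaths (M : Set (Sym2 V)) (P : Set ((ℕ → V) × ℕ)) : Set (Sym2 V) :=
  symmDiff M (⋃ q ∈ P, pathEdges q.1 q.2)

theorem isAugPath.mem_coveredVerts_flipPaths (h : isAugPath G M q.1 q.2) (hq : q ∈ P) {j : ℕ}
    (hj : j ≤ q.2) : q.1 j ∈ coveredVerts (flipPaths M P) := by
  obtain ⟨e, he, heM, hje⟩ := h.exists_mem_pathEdges_notMem hj
  exact ⟨e, Or.inr ⟨Set.mem_biUnion hq he, heM⟩, hje⟩

theorem coveredVerts_subset_coveredVerts_flipPaths (hP : ∀ q ∈ P, isAugPath G M q.1 q.2) :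
    coveredVerts M ⊆ coveredVerts (flipPaths M P) := by
  rintro v ⟨e, heM, hve⟩
  by_cases he : e ∈ ⋃ q ∈ P, pathEdges q.1 q.2
  · obtain ⟨q, hq, heq⟩ := Set.mem_iUnion₂.1 he
    obtain ⟨j, hj, rfl⟩ := exists_eq_of_mem_pathEdges heq hve
    exact (hP q hq).mem_coveredVerts_flipPaths hq hj
  · exact ⟨e, Or.inl ⟨heM, he⟩, hve⟩

theorem isAugPath.nontrivial_newly_covered_inter_walkBall (h : isAugPath G M q.1 q.2)
    (hq : q ∈ P) {j : ℕ} (hj : j ≤ q.2) :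
    ((coveredVerts (flipPaths M P) \ coveredVerts M) ∩ walkBall G (q.1 j) q.2).Nontrivial := by
  have ⟨_, _, _, hstart, hend, _⟩ := h
  exact ⟨q.1 0, ⟨⟨h.mem_coveredVerts_flipPaths hq q.2.zero_le, hstart⟩,
      h.mem_walkBall hj q.2.zero_le⟩,
    q.1 q.2, ⟨⟨h.mem_coveredVerts_flipPaths hq le_rfl, hend⟩, h.mem_walkBall hj le_rfl⟩,
    h.start_ne_end⟩

end Flip

theorem stmt10_general {V : Type*} (G : SimpleGraph V) (L : ℕ)
    (M : ℕ → Set (Sym2 V)) (P : ℕ → Set ((ℕ → V) × ℕ))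
    (haug : ∀ k, ∀ q ∈ P k, isAugPath G (M k) q.1 q.2 ∧ q.2 ≤ L)
    (hstep : ∀ k, M (k + 1) = flipPaths (M k) (P k))
    (a : V) (hball : (walkBall G a L).Finite) :
    {k | ∃ q ∈ P k, ∃ j ≤ q.2, q.1 j = a}.Finite ∧
      2 * {k | ∃ q ∈ P k, ∃ j ≤ q.2, q.1 j = a}.ncard ≤ (walkBall G a L).ncard := by
  set S := {k | ∃ q ∈ P k, ∃ j ≤ q.2, q.1 j = a}
  let N : ℕ → Set V := fun k ↦ (coveredVerts (M (k + 1)) \ coveredVerts (M k)) ∩ walkBall G a L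
  have hmono : Monotone fun k ↦ coveredVerts (M k) := monotone_nat_of_le_succ fun k ↦
    hstep k ▸ coveredVerts_subset_coveredVerts_flipPaths fun q hq ↦ (haug k q hq).1
  have hdisj : S.PairwiseDisjoint N := fun i _ j _ hij ↦
    (pairwise_disjoint_sdiff_succ hmono hij).mono Set.inter_subset_left Set.inter_subset_left
  have hsub : ∀ k ∈ S, N k ⊆ walkBall G a L := fun _ _ ↦ Set.inter_subset_right
  have hnontriv : ∀ k ∈ S, (N k).Nontrivial := by
    rintro k ⟨q, hq, j, hj, rfl⟩
    obtain ⟨hqaug, hqL⟩ := haug k q hq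
    have hpair := hqaug.nontrivial_newly_covered_inter_walkBall hq hj
    rw [← hstep k] at hpair
    exact hpair.mono (Set.inter_subset_inter_right _ (walkBall_mono G _ hqL))
  have hfin : S.Finite :=
    finite_of_pairwiseDisjoint_nonempty hball hdisj hsub fun k hk ↦ (hnontriv k hk).nonempty
  exact ⟨hfin, mul_ncard_le_ncard_of_pairwiseDisjoint hfin hball hdisj hsub fun k hk ↦
    (Set.one_lt_ncard (hball.subset (hsub k hk))).2 (hnontriv k hk)⟩

/-- If `M_{k+1}` arises from `M_k` by flipping a family `P_k` of pairwise
vertex-disjoint `M_k`-augmenting paths of length ≤ L, then an edge `{a,b}` of `G` whose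
ball `B_L(a)` of radius `L` is finite lies on paths of `P_k` for only finitely many `k`;
in fact `2·|{k : {a,b} ∈ ⋃_{p ∈ P_k} E(p)}| ≤ |B_L(a)|`. -/
theorem stmt10 {V : Type*} (G : SimpleGraph V) (L : ℕ)
    (M : ℕ → Set (Sym2 V)) (P : ℕ → Set ((ℕ → V) × ℕ))
    (hM : ∀ k : ℕ, isMatching G (M k))
    (haug : ∀ k : ℕ, ∀ q ∈ P k, isAugPath G (M k) q.1 q.2 ∧ q.2 ≤ L)
    (hdisj : ∀ k : ℕ, ∀ q ∈ P k, ∀ q' ∈ P k, q ≠ q' →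
      ∀ a ≤ q.2, ∀ b ≤ q'.2, q.1 a ≠ q'.1 b)
    (hstep : ∀ k : ℕ, M (k+1) = symmDiff (M k) (⋃ q ∈ P k, pathEdges q.1 q.2))
    (a b : V) (hab : G.Adj a b)
    (hball : {x : V | ∃ w : G.Walk a x, w.length ≤ L}.Finite) :
    {k : ℕ | ∃ q ∈ P k, s(a, b) ∈ pathEdges q.1 q.2}.Finite ∧
    2 * ({k : ℕ | ∃ q ∈ P k, s(a, b) ∈ pathEdges q.1 q.2}).ncard
      ≤ ({x : V | ∃ w : G.Walk a x, w.length ≤ L}).ncard := by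
  obtain ⟨hfin, hcard⟩ := stmt10_general G L M P haug hstep a hball
  have hsub := setOf_mem_pathEdges_subset_setOf_eq P a b
  exact ⟨hfin.subset hsub, (Nat.mul_le_mul_left 2 (Set.ncard_le_ncard hsub hfin)).trans hcard⟩
end
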